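/- arXiv:2102.09213 — 6 statements merged into one kernel-verified Lean document; each statement's English description precedes it below -/
import Mathlib

section
/- Let q be the Lorentzian quadratic form q(x) = 2x₁x₃ + x₂² on ℝ³ and let ρ be a continuous representation of O(1,2) on a finite-dimensional real normed vector space V. Let (g_k), (g'_k), (g''_k) be three sequences in O(1,2), and assume there exist nonzero vectors p, p', p'' ∈ ℝ³ with q(p) = q(p') = q(p'') = 0, pairwise non-proportional, and real scalars (λ_k), (λ'_k), (λ''_k) such that λ_k · g_k⁻¹(o) → p, λ'_k · (g'_k)⁻¹(o) → p', and λ''_k · (g''_k)⁻¹(o) → p'' in ℝ³, where o = e₁ − e₃. Then every vector v ∈ V that is stable under each of the three sets {g_k : k ∈ ℕ}, {g'_k : k ∈ ℕ}, {g''_k : k ∈ ℕ} is fixed by the identity component of O(1,2): ρ(g)v = v for every g in the connected component of the identity in O(1,2). -/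
open Matrix Filter Topology Bornology

noncomputable section

/-- The Lorentzian quadratic form `q(x) = 2 x₁ x_{n+1} + x₂² + ⋯ + xₙ²` on `ℝ^{n+1}`
(coordinates indexed by `Fin (n+1)`, so `x₁` is `x 0` and `x_{n+1}` is `x (Fin.last n)`). -/
def lorQ (n : ℕ) (x : Fin (n + 1) → ℝ) : ℝ :=
  2 * x 0 * x (Fin.last n) +
    ∑ i : Fin (n + 1), if i ≠ 0 ∧ i ≠ Fin.last n then x i ^ 2 else 0

/-- The polar bilinear form `B` of `lorQ`. -/
def lorB (n : ℕ) (x y : Fin (n + 1) → ℝ) : ℝ :=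
  x 0 * y (Fin.last n) + x (Fin.last n) * y 0 +
    ∑ i : Fin (n + 1), if i ≠ 0 ∧ i ≠ Fin.last n then x i * y i else 0

/-- The Lorentz group `O(1,n)`: linear automorphisms of `ℝ^{n+1}` preserving `lorQ`. -/
def LorentzGrp (n : ℕ) : Subgroup (GL (Fin (n + 1)) ℝ) where
  carrier := {g | ∀ x, lorQ n ((g : Matrix (Fin (n + 1)) (Fin (n + 1)) ℝ).mulVec x) = lorQ n x}
  one_mem' := by intro x; simp
  mul_mem' := by
    intro a b ha hb x
    have h : ((a * b : GL (Fin (n + 1)) ℝ) : Matrix (Fin (n + 1)) (Fin (n + 1)) ℝ).mulVec x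
        = (a : Matrix (Fin (n + 1)) (Fin (n + 1)) ℝ).mulVec
            ((b : Matrix (Fin (n + 1)) (Fin (n + 1)) ℝ).mulVec x) := by
      rw [Matrix.mulVec_mulVec]; rfl
    rw [h, ha, hb]
  inv_mem' := by
    intro g hg x
    have h : (g : Matrix (Fin (n + 1)) (Fin (n + 1)) ℝ).mulVec
        ((↑g⁻¹ : Matrix (Fin (n + 1)) (Fin (n + 1)) ℝ).mulVec x) = x := by
      rw [Matrix.mulVec_mulVec]
      have : (g : Matrix (Fin (n + 1)) (Fin (n + 1)) ℝ) * (↑g⁻¹ : Matrix (Fin (n + 1)) (Fin (n + 1)) ℝ)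
          = (1 : Matrix (Fin (n + 1)) (Fin (n + 1)) ℝ) := by
        rw [← Units.val_mul, mul_inv_cancel, Units.val_one]
      rw [this, Matrix.one_mulVec]
    calc lorQ n ((↑g⁻¹ : Matrix (Fin (n + 1)) (Fin (n + 1)) ℝ).mulVec x)
        = lorQ n ((g : Matrix (Fin (n + 1)) (Fin (n + 1)) ℝ).mulVec
            ((↑g⁻¹ : Matrix (Fin (n + 1)) (Fin (n + 1)) ℝ).mulVec x)) := (hg _).symm
      _ = lorQ n x := by rw [h]

/-- The action of an element of `O(1,n)` on a vector of `ℝ^{n+1}`. -/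
def lorAct {n : ℕ} (g : LorentzGrp n) (x : Fin (n + 1) → ℝ) : Fin (n + 1) → ℝ :=
  ((g : GL (Fin (n + 1)) ℝ) : Matrix (Fin (n + 1)) (Fin (n + 1)) ℝ).mulVec x

/-- The base point `o = e₁ − e_{n+1}`, a timelike vector. -/
def basePt (n : ℕ) : Fin (n + 1) → ℝ := fun i =>
  if i = 0 then 1 else if i = Fin.last n then -1 else 0

/-- `u` is a limit direction of a subset `G` of `O(1,n)`: `u` is nonzero lightlike, and some
sequence `λ_k • g_k⁻¹(o)`, with `g_k ∈ G`, converges to `u`. -/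
def IsLimitDirection (n : ℕ) (G : Set (LorentzGrp n)) (u : Fin (n + 1) → ℝ) : Prop :=
  u ≠ 0 ∧ lorQ n u = 0 ∧
    ∃ (g : ℕ → LorentzGrp n) (lam : ℕ → ℝ), (∀ k, g k ∈ G) ∧
      Tendsto (fun k => lam k • lorAct (g k)⁻¹ (basePt n)) atTop (𝓝 u)

/-- A vector `v` is stable under `G ⊆ O(1,n)` if its `ρ`-orbit under `G` is bounded. -/
def IsStableVec {n : ℕ} {V : Type*} [NormedAddCommGroup V] [NormedSpace ℝ V]
    (ρ : LorentzGrp n →* (V →L[ℝ] V)) (G : Set (LorentzGrp n)) (v : V) : Prop :=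
  IsBounded {w : V | ∃ g ∈ G, w = ρ g v}

/-- `SO°(E)`: the identity component of the subgroup of `O(1,n)` of elements leaving `E`
invariant and fixing pointwise every vector orthogonal to `E`. -/
def SOIdComp (n : ℕ) (E : Submodule ℝ (Fin (n + 1) → ℝ)) : Set (LorentzGrp n) :=
  connectedComponentIn
    {g : LorentzGrp n |
      E.map ((g : GL (Fin (n + 1)) ℝ) : Matrix (Fin (n + 1)) (Fin (n + 1)) ℝ).mulVecLin = E ∧
      ∀ x : Fin (n + 1) → ℝ, (∀ e ∈ E, lorB n x e = 0) → lorAct g x = x} 1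

open Polynomial in
lemma poly_of_rational_grid (f : ℝ → ℝ) (hf : Continuous f)
    (h : ∀ q : ℕ, 0 < q → ∃ P : Polynomial ℝ, ∀ m : ℕ, f (m / q) = P.eval (m : ℝ)) :
    ∃ P : Polynomial ℝ, ∀ s : ℝ, 0 ≤ s → f s = P.eval s := by
  obtain ⟨P, hP⟩ := h 1 one_pos
  refine ⟨P, ?_⟩
  have hrat : ∀ q : ℕ, 0 < q → ∀ m : ℕ, f (m / q) = P.eval ((m : ℝ) / q) := by
    intro q hq m
    obtain ⟨Q, hQ⟩ := h q hq
    have hq' : (q : ℝ) ≠ 0 := by positivity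
    have key : Q.comp (C (q : ℝ) * X) = P := by
      apply Polynomial.eq_of_infinite_eval_eq
      apply Set.Infinite.mono (s := Set.range (fun n : ℕ => (n : ℝ)))
      · rintro _ ⟨n, rfl⟩
        have h1 := hP n
        have h2 := hQ (q * n)
        simp only [Set.mem_ofPred_eq, eval_comp, eval_mul, eval_C, eval_X]
        rw [← h1]
        push_cast at h2
        rw [← h2]
        congr 1
        field_simp
        simp
      · exact Set.infinite_range_of_injective Nat.cast_injective
    rw [hQ m, ← key]
    simp only [eval_comp, eval_mul, eval_C, eval_X]
    congr 1
    field_simp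
  intro s hs
  have h1 : Tendsto (fun q : ℕ => ((⌊s * q⌋₊ : ℕ) : ℝ) / q) atTop (𝓝 s) :=
    (tendsto_nat_floor_mul_div_atTop (R := ℝ) hs).comp tendsto_natCast_atTop_atTop
  have h2 := (hf.tendsto s).comp h1
  have h3 := (P.continuous.tendsto s).comp h1
  refine tendsto_nhds_unique (h2.congr' ?_) h3
  filter_upwards [eventually_gt_atTop 0] with q hq
  exact hrat q hq _

open Polynomial in
lemma choose_poly (k : ℕ) : ∃ P : Polynomial ℝ, ∀ m : ℕ, ((m.choose k : ℕ) : ℝ) = P.eval (m : ℝ) := by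
  refine ⟨C ((k.factorial : ℝ)⁻¹) * descPochhammer ℝ k, fun m => ?_⟩
  rw [eval_mul, eval_C, descPochhammer_eval_eq_descFactorial, Nat.descFactorial_eq_factorial_mul_choose]
  have : (k.factorial : ℝ) ≠ 0 := by positivity
  push_cast
  field_simp

open Polynomial in
lemma unip_pow_poly {n : ℕ} (N : Matrix (Fin n) (Fin n) ℝ) (d : ℕ) (hN : N ^ d = 0) (i j : Fin n) :
    ∃ P : Polynomial ℝ, ∀ m : ℕ, ((1 + N) ^ m) i j = P.eval (m : ℝ) := by
  choose Q hQ using choose_poly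
  refine ⟨∑ k ∈ Finset.range d, Q k * C ((N ^ k) i j), fun m => ?_⟩
  have h1 : (1 + N) ^ m = ∑ k ∈ Finset.range d, (m.choose k : ℝ) • N ^ k := by
    rw [add_comm, (Commute.one_right N).add_pow]
    have e : ∀ k, N ^ k * 1 ^ (m - k) * ((m.choose k : ℕ) : Matrix (Fin n) (Fin n) ℝ)
        = (m.choose k : ℝ) • N ^ k := by
      intro k
      rw [one_pow, mul_one, ← nsmul_eq_mul', Nat.cast_smul_eq_nsmul]
    simp_rw [e]
    rcases le_total (m + 1) d with h | h
    · apply Finset.sum_subset (Finset.range_subset_range.2 h)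
      intro k _ hk
      rw [Nat.choose_eq_zero_of_lt (by simpa using hk)]; simp
    · symm
      apply Finset.sum_subset (Finset.range_subset_range.2 h)
      intro k _ hk
      have : d ≤ k := by simpa using hk
      rw [pow_eq_zero_of_le this hN, smul_zero]
  rw [h1, Matrix.sum_apply, eval_finsetSum]
  refine Finset.sum_congr rfl fun k _ => ?_
  simp [hQ k m]

lemma one_param_unip {n : ℕ} (φ : ℝ → Matrix (Fin n) (Fin n) ℝ) (hc : Continuous φ)
    (h0 : φ 0 = 1)
    (hconj : ∀ t s, ∃ A B : Matrix (Fin n) (Fin n) ℝ, A * B = 1 ∧ φ (Real.exp t * s) = A * φ s * B)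
    (s : ℝ) : (φ s - 1) ^ n = 0 := by
  have hch : (φ s).charpoly = (1 : Matrix (Fin n) (Fin n) ℝ).charpoly := by
    apply Polynomial.funext
    intro x
    rw [Matrix.eval_charpoly, Matrix.eval_charpoly]
    have h1 : Tendsto (fun t : ℝ => (Matrix.scalar (Fin n) x - φ (Real.exp t * s)).det) atBot
        (𝓝 (Matrix.scalar (Fin n) x - φ 0).det) := by
      have hcont : Continuous fun u : ℝ => (Matrix.scalar (Fin n) x - φ u).det :=
        Continuous.matrix_det (continuous_const.sub hc)
      have h2 : Tendsto (fun t : ℝ => Real.exp t * s) atBot (𝓝 0) := by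
        simpa using Real.tendsto_exp_atBot.mul_const s
      exact (hcont.tendsto 0).comp h2
    rw [h0] at h1
    refine tendsto_nhds_unique (tendsto_const_nhds.congr fun t => ?_) h1
    obtain ⟨A, B, hAB, h⟩ := hconj t s
    have hBA : B * A = 1 := mul_eq_one_comm.1 hAB
    have e : Matrix.scalar (Fin n) x - φ (Real.exp t * s) = A * (Matrix.scalar (Fin n) x - φ s) * B := by
      rw [h, mul_sub, sub_mul]
      congr 1
      have : A * (Matrix.scalar (Fin n)) x = (Matrix.scalar (Fin n)) x * A :=
        ((Matrix.scalar_commute x (fun r => mul_comm _ _) A).eq).symm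
      rw [this, mul_assoc, hAB, mul_one]
    rw [e, Matrix.det_mul_right_comm, hAB, one_mul]
  have := Matrix.aeval_self_charpoly (φ s)
  rw [hch, Matrix.charpoly_one] at this
  simpa using this

lemma one_param_poly {n : ℕ} (φ : ℝ → Matrix (Fin n) (Fin n) ℝ) (hc : Continuous φ)
    (h0 : φ 0 = 1) (hadd : ∀ s t, φ (s + t) = φ s * φ t)
    (hconj : ∀ t s, ∃ A B : Matrix (Fin n) (Fin n) ℝ, A * B = 1 ∧ φ (Real.exp t * s) = A * φ s * B) :
    ∃ P : Matrix (Fin n) (Fin n) (Polynomial ℝ), ∀ s : ℝ, 0 ≤ s →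
      φ s = (Polynomial.evalRingHom s).mapMatrix P := by
  have hmul : ∀ (s : ℝ) (m : ℕ), φ (m * s) = φ s ^ m := by
    intro s m
    induction m with
    | zero => simp [h0]
    | succ k ih => rw [pow_succ, ← ih, ← hadd]; congr 1; push_cast; ring
  have : ∀ i j, ∃ P : Polynomial ℝ, ∀ s : ℝ, 0 ≤ s → φ s i j = P.eval s := by
    intro i j
    apply poly_of_rational_grid (fun s => φ s i j)
    · exact hc.matrix_elem i j
    · intro q hq
      obtain ⟨P, hP⟩ := unip_pow_poly (φ (1 / q) - 1) n (one_param_unip φ hc h0 hconj _) i j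
      refine ⟨P, fun m => ?_⟩
      rw [← hP m]
      simp only [add_sub_cancel]
      rw [← hmul]; congr 2; ring_nf
  choose P hP using this
  exact ⟨fun i j => P i j, fun s hs => by ext i j; rw [hP i j s hs]; rfl⟩

open Polynomial in
lemma poly_rev (P : Polynomial ℝ) (c : ℝ) (N : ℕ) (hN : P.natDegree ≤ N) :
    ∃ Q : Polynomial ℝ, ∀ b : ℝ, 0 < b → b ^ N * P.eval (c / b) = Q.eval b := by
  refine ⟨∑ i ∈ Finset.range (N + 1), C (P.coeff i * c ^ i) * X ^ (N - i), fun b hb => ?_⟩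
  rw [eval_eq_sum_range' (Nat.lt_succ_of_le hN), Finset.mul_sum, eval_finsetSum]
  refine Finset.sum_congr rfl fun i hi => ?_
  have hi' : i ≤ N := by simpa [Nat.lt_succ_iff] using hi
  simp only [eval_mul, eval_C, eval_pow, eval_X]
  rw [div_pow, ← Nat.sub_add_cancel hi', pow_add]
  simp only [Nat.add_sub_cancel]
  field_simp

lemma polymat_rev {n : ℕ} (P : Matrix (Fin n) (Fin n) (Polynomial ℝ)) (c : ℝ) :
    ∃ (N : ℕ) (Q : Matrix (Fin n) (Fin n) (Polynomial ℝ)), ∀ b : ℝ, 0 < b →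
      b ^ N • (Polynomial.evalRingHom (c / b)).mapMatrix P = (Polynomial.evalRingHom b).mapMatrix Q := by
  have hN : ∃ N : ℕ, ∀ i j, (P i j).natDegree ≤ N := by
    refine ⟨Finset.univ.sup fun x : Fin n × Fin n => (P x.1 x.2).natDegree, fun i j => ?_⟩
    exact Finset.le_sup (f := fun x : Fin n × Fin n => (P x.1 x.2).natDegree) (Finset.mem_univ (i, j))
  obtain ⟨N, hN⟩ := hN
  choose Q hQ using fun i j => poly_rev (P i j) c N (hN i j)
  exact ⟨N, fun i j => Q i j, fun b hb => by ext i j; exact hQ i j b hb⟩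

lemma polymat_expand {n : ℕ} (P : Matrix (Fin n) (Fin n) (Polynomial ℝ)) :
    ∃ (K : ℕ) (C : ℕ → Matrix (Fin n) (Fin n) ℝ), ∀ b : ℝ,
      (Polynomial.evalRingHom b).mapMatrix P = ∑ j ∈ Finset.range K, b ^ j • C j := by
  refine ⟨(Finset.univ.sup fun x : Fin n × Fin n => (P x.1 x.2).natDegree) + 1,
    fun k => Matrix.of fun i j => (P i j).coeff k, fun b => ?_⟩
  ext i j
  simp only [RingHom.mapMatrix_apply, Matrix.map_apply, Polynomial.coe_evalRingHom,
    Matrix.sum_apply, Matrix.smul_apply, Matrix.of_apply, smul_eq_mul]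
  rw [Polynomial.eval_eq_sum_range' (Nat.lt_succ_of_le
    (Finset.le_sup (f := fun x : Fin n × Fin n => (P x.1 x.2).natDegree) (Finset.mem_univ (i, j))))]
  exact Finset.sum_congr rfl fun _ _ => mul_comm _ _

open Polynomial in
lemma coeff_zero_of_sum {n : ℕ} (K : ℕ) (c : ℕ → Matrix (Fin n) (Fin n) ℝ)
    (h : ∀ b : ℝ, 0 < b → ∑ j ∈ Finset.range K, b ^ j • c j = 0) : ∀ j < K, c j = 0 := by
  intro k hk
  ext i l
  have : (∑ j ∈ Finset.range K, C (c j i l) * X ^ j : Polynomial ℝ) = 0 := by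
    apply Polynomial.eq_zero_of_infinite_isRoot
    apply Set.Infinite.mono _ (Set.Ioi_infinite (0 : ℝ))
    intro b hb
    have := congrFun (congrFun (h b hb) i) l
    simp only [Set.mem_ofPred_eq, IsRoot, eval_finsetSum, eval_mul, eval_C, eval_pow, eval_X]
    simpa [Matrix.sum_apply, mul_comm] using this
  have h2 := congrArg (fun p => coeff p k) this
  simpa [finsetSum_coeff, coeff_C_mul, coeff_X_pow, hk] using h2

lemma lorQ_two (x : Fin 3 → ℝ) : lorQ 2 x = 2 * x 0 * x 2 + x 1 ^ 2 := by
  have e : (Fin.last 2) = (2 : Fin 3) := rfl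
  simp [lorQ, Fin.sum_univ_three, e]

/-- The underlying matrix. -/
def lmat (g : LorentzGrp 2) : Matrix (Fin 3) (Fin 3) ℝ :=
  ((g : GL (Fin 3) ℝ) : Matrix (Fin 3) (Fin 3) ℝ)

lemma lmat_mul (g h : LorentzGrp 2) : lmat (g * h) = lmat g * lmat h := rfl

lemma lmat_one : lmat 1 = 1 := rfl

lemma lmat_ext {g h : LorentzGrp 2} (e : lmat g = lmat h) : g = h :=
  Subtype.ext (Units.ext e)

lemma lmat_continuous : Continuous lmat :=
  Units.continuous_val.comp continuous_subtype_val

lemma lorAct_eq (g : LorentzGrp 2) (x : Fin 3 → ℝ) : lorAct g x = lmat g *ᵥ x := rfl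

lemma lorAct_mul (g h : LorentzGrp 2) (x : Fin 3 → ℝ) :
    lorAct (g * h) x = lorAct g (lorAct h x) := by
  simp [lorAct_eq, lmat_mul, Matrix.mulVec_mulVec]

lemma lorAct_one (x : Fin 3 → ℝ) : lorAct (1 : LorentzGrp 2) x = x := by
  simp [lorAct_eq, lmat_one]

lemma lorAct_inv_eq {g : LorentzGrp 2} {x y : Fin 3 → ℝ} (h : lorAct g x = y) :
    lorAct g⁻¹ y = x := by
  rw [← h, ← lorAct_mul, inv_mul_cancel, lorAct_one]

lemma lorAct_smul (g : LorentzGrp 2) (c : ℝ) (x : Fin 3 → ℝ) :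
    lorAct g (c • x) = c • lorAct g x := by
  simp [lorAct_eq, Matrix.mulVec_smul]

lemma lorAct_continuous (g : LorentzGrp 2) : Continuous (lorAct g) :=
  Continuous.matrix_mulVec continuous_const continuous_id

lemma lorQ_act (g : LorentzGrp 2) (x : Fin 3 → ℝ) : lorQ 2 (lorAct g x) = lorQ 2 x :=
  g.2 x

/-- Build a group element from a matrix and its inverse. -/
def mkL (M M' : Matrix (Fin 3) (Fin 3) ℝ) (h : M * M' = 1) (h' : M' * M = 1)
    (hq : ∀ x, lorQ 2 (M *ᵥ x) = lorQ 2 x) : LorentzGrp 2 :=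
  ⟨⟨M, M', h, h'⟩, hq⟩

lemma mkL_continuous {X : Type*} [TopologicalSpace X] (M M' : X → Matrix (Fin 3) (Fin 3) ℝ)
    (h : ∀ x, M x * M' x = 1) (h' : ∀ x, M' x * M x = 1)
    (hq : ∀ x y, lorQ 2 (M x *ᵥ y) = lorQ 2 y) (hM : Continuous M) (hM' : Continuous M') :
    Continuous fun x => mkL (M x) (M' x) (h x) (h' x) (hq x) := by
  apply Continuous.subtype_mk
  rw [Units.continuous_iff]
  exact ⟨hM, hM'⟩

def mU (s : ℝ) : Matrix (Fin 3) (Fin 3) ℝ := !![1, -s, -s^2/2; 0, 1, s; 0, 0, 1]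
def mLo (s : ℝ) : Matrix (Fin 3) (Fin 3) ℝ := !![1, 0, 0; s, 1, 0; -s^2/2, -s, 1]
def mD (t : ℝ) : Matrix (Fin 3) (Fin 3) ℝ := !![Real.exp t, 0, 0; 0, 1, 0; 0, 0, Real.exp (-t)]
def mW : Matrix (Fin 3) (Fin 3) ℝ := !![0, 0, 1; 0, 1, 0; 1, 0, 0]

lemma mU_add (s t : ℝ) : mU (s + t) = mU s * mU t := by
  ext i j; fin_cases i <;> fin_cases j <;>
    simp [mU, Matrix.mul_apply, Fin.sum_univ_three] <;> ring

lemma mLo_add (s t : ℝ) : mLo (s + t) = mLo s * mLo t := by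
  ext i j; fin_cases i <;> fin_cases j <;>
    simp [mLo, Matrix.mul_apply, Fin.sum_univ_three] <;> ring

lemma mD_add (s t : ℝ) : mD (s + t) = mD s * mD t := by
  ext i j; fin_cases i <;> fin_cases j <;>
    simp [mD, Matrix.mul_apply, Fin.sum_univ_three, ← Real.exp_add] ; ring

lemma mU_zero : mU 0 = 1 := by
  ext i j; fin_cases i <;> fin_cases j <;> simp [mU]

lemma mLo_zero : mLo 0 = 1 := by
  ext i j; fin_cases i <;> fin_cases j <;> simp [mLo]

lemma mD_zero : mD 0 = 1 := by
  ext i j; fin_cases i <;> fin_cases j <;> simp [mD]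

lemma mW_mul : mW * mW = 1 := by
  ext i j; fin_cases i <;> fin_cases j <;> simp [mW]

lemma mU_q (s : ℝ) (x) : lorQ 2 (mU s *ᵥ x) = lorQ 2 x := by
  rw [lorQ_two, lorQ_two]
  simp [mU, Matrix.mulVec, dotProduct, Fin.sum_univ_three]; ring

lemma mLo_q (s : ℝ) (x) : lorQ 2 (mLo s *ᵥ x) = lorQ 2 x := by
  rw [lorQ_two, lorQ_two]
  simp [mLo, Matrix.mulVec, dotProduct, Fin.sum_univ_three]; ring

lemma mD_q (s : ℝ) (x) : lorQ 2 (mD s *ᵥ x) = lorQ 2 x := by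
  rw [lorQ_two, lorQ_two]
  simp [mD, Matrix.mulVec, dotProduct, Fin.sum_univ_three, Real.exp_neg]; field_simp

lemma mW_q (x) : lorQ 2 (mW *ᵥ x) = lorQ 2 x := by
  rw [lorQ_two, lorQ_two]
  simp [mW, Matrix.mulVec, dotProduct, Fin.sum_univ_three]; ring

def gU (s : ℝ) : LorentzGrp 2 := mkL (mU s) (mU (-s)) (by rw [← mU_add]; simp [mU_zero])
  (by rw [← mU_add]; simp [mU_zero]) (mU_q s)
def gL (s : ℝ) : LorentzGrp 2 := mkL (mLo s) (mLo (-s)) (by rw [← mLo_add]; simp [mLo_zero])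
  (by rw [← mLo_add]; simp [mLo_zero]) (mLo_q s)
def gD (s : ℝ) : LorentzGrp 2 := mkL (mD s) (mD (-s)) (by rw [← mD_add]; simp [mD_zero])
  (by rw [← mD_add]; simp [mD_zero]) (mD_q s)
def gW : LorentzGrp 2 := mkL mW mW mW_mul mW_mul mW_q

lemma lmat_gU (s : ℝ) : lmat (gU s) = mU s := rfl
lemma lmat_gL (s : ℝ) : lmat (gL s) = mLo s := rfl
lemma lmat_gD (s : ℝ) : lmat (gD s) = mD s := rfl
lemma lmat_gW : lmat gW = mW := rfl

lemma mU_cont : Continuous mU := by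
  refine continuous_matrix fun i j => ?_
  fin_cases i <;> fin_cases j <;> simp [mU] <;> fun_prop
lemma mLo_cont : Continuous mLo := by
  refine continuous_matrix fun i j => ?_
  fin_cases i <;> fin_cases j <;> simp [mLo] <;> fun_prop
lemma mD_cont : Continuous mD := by
  refine continuous_matrix fun i j => ?_
  fin_cases i <;> fin_cases j <;> simp [mD] <;> fun_prop

lemma gU_cont : Continuous gU :=
  mkL_continuous _ _ _ _ _ mU_cont (mU_cont.comp continuous_neg)
lemma gL_cont : Continuous gL :=
  mkL_continuous _ _ _ _ _ mLo_cont (mLo_cont.comp continuous_neg)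
lemma gD_cont : Continuous gD :=
  mkL_continuous _ _ _ _ _ mD_cont (mD_cont.comp continuous_neg)

lemma gU_add (s t : ℝ) : gU (s + t) = gU s * gU t := lmat_ext (mU_add s t)
lemma gL_add (s t : ℝ) : gL (s + t) = gL s * gL t := lmat_ext (mLo_add s t)
lemma gD_add (s t : ℝ) : gD (s + t) = gD s * gD t := lmat_ext (mD_add s t)
lemma gU_zero : gU 0 = 1 := lmat_ext mU_zero
lemma gL_zero : gL 0 = 1 := lmat_ext mLo_zero
lemma gD_zero : gD 0 = 1 := lmat_ext mD_zero
lemma gW_mul : gW * gW = 1 := lmat_ext mW_mul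
lemma gU_neg (s : ℝ) : gU (-s) = (gU s)⁻¹ := by
  rw [eq_inv_iff_mul_eq_one, ← gU_add, neg_add_cancel, gU_zero]
lemma gL_neg (s : ℝ) : gL (-s) = (gL s)⁻¹ := by
  rw [eq_inv_iff_mul_eq_one, ← gL_add, neg_add_cancel, gL_zero]
lemma gD_neg (s : ℝ) : gD (-s) = (gD s)⁻¹ := by
  rw [eq_inv_iff_mul_eq_one, ← gD_add, neg_add_cancel, gD_zero]

lemma gDU (t s : ℝ) : gU (Real.exp t * s) = gD t * gU s * gD (-t) := by
  apply lmat_ext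
  simp only [lmat_mul, lmat_gU, lmat_gD]
  ext i j; fin_cases i <;> fin_cases j <;>
    simp [mU, mD, Matrix.mul_apply, Fin.sum_univ_three, Real.exp_neg] <;> ring

lemma gDL (t s : ℝ) : gL (Real.exp t * s) = gD (-t) * gL s * gD t := by
  apply lmat_ext
  simp only [lmat_mul, lmat_gL, lmat_gD]
  ext i j; fin_cases i <;> fin_cases j <;>
    simp [mLo, mD, Matrix.mul_apply, Fin.sum_univ_three, Real.exp_neg] <;> ring

lemma gWD (t : ℝ) : gW * gD t * gW = gD (-t) := by
  apply lmat_ext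
  simp only [lmat_mul, lmat_gW, lmat_gD]
  ext i j; fin_cases i <;> fin_cases j <;>
    simp [mW, mD, Matrix.mul_apply, Fin.sum_univ_three, Real.exp_neg]

lemma gD_factor (t : ℝ) : gD t = gL (2 / Real.exp (t / 2)) * gU (Real.exp (t / 2)) *
    (gU (-1) * gL (-2) * gU (-1)) * gU (1 / Real.exp (t / 2)) := by
  apply lmat_ext
  simp only [lmat_mul, lmat_gL, lmat_gD, lmat_gU]
  have h1 : Real.exp t = Real.exp (t / 2) ^ 2 := by rw [← Real.exp_nat_mul]; congr 1; push_cast; ring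
  have hb : Real.exp (t / 2) ≠ 0 := (Real.exp_pos _).ne'
  rw [mD, Real.exp_neg, h1]
  generalize Real.exp (t / 2) = b at hb
  ext i j; fin_cases i <;> fin_cases j <;>
    simp [mU, mLo, Matrix.mul_apply, Fin.sum_univ_three] <;> field_simp <;> ring

lemma laurent {n : ℕ} (R : LorentzGrp 2 →* Matrix (Fin n) (Fin n) ℝ) (hR : Continuous R) :
    ∃ (K M : ℕ) (C : ℕ → Matrix (Fin n) (Fin n) ℝ), ∀ t : ℝ,
      Real.exp (t / 2) ^ M • R (gD t) = ∑ j ∈ Finset.range K, Real.exp (t / 2) ^ j • C j := by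
  obtain ⟨PU, hPU⟩ := one_param_poly (fun s => R (gU s)) (hR.comp gU_cont)
    (by simp [gU_zero]) (fun s t => by simp [gU_add]) (fun t s => ⟨R (gD t), R (gD (-t)), by
      rw [← map_mul, ← gD_add]; simp [gD_zero], by simp [gDU]⟩)
  obtain ⟨PL, hPL⟩ := one_param_poly (fun s => R (gL s)) (hR.comp gL_cont)
    (by simp [gL_zero]) (fun s t => by simp [gL_add]) (fun t s => ⟨R (gD (-t)), R (gD t), by
      rw [← map_mul, ← gD_add]; simp [gD_zero], by simp [gDL]⟩)
  obtain ⟨N1, Q1, hQ1⟩ := polymat_rev PL 2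
  obtain ⟨N2, Q2, hQ2⟩ := polymat_rev PU 1
  obtain ⟨K, C, hC⟩ := polymat_expand (Q1 * PU *
    (Polynomial.C).mapMatrix (R (gU (-1) * gL (-2) * gU (-1))) * Q2)
  refine ⟨K, N1 + N2, C, fun t => ?_⟩
  have hb : 0 < Real.exp (t / 2) := Real.exp_pos _
  rw [← hC, map_mul, map_mul, map_mul, ← hQ1 _ hb, ← hQ2 _ hb, ← hPL _ (by positivity),
    ← hPU _ (by positivity), ← hPU _ (by positivity), gD_factor t]
  have e : (Polynomial.evalRingHom (Real.exp (t / 2))).mapMatrix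
      ((Polynomial.C).mapMatrix (R (gU (-1) * gL (-2) * gU (-1))))
      = R (gU (-1) * gL (-2) * gU (-1)) := by
    generalize R (gU (-1) * gL (-2) * gU (-1)) = A
    ext i j; simp
  rw [e]
  simp only [map_mul, smul_mul_assoc, mul_smul_comm, smul_smul, pow_add]
  congr 1
  ring

lemma laurent_proj {n : ℕ} (R : LorentzGrp 2 →* Matrix (Fin n) (Fin n) ℝ)
    (K M : ℕ) (C : ℕ → Matrix (Fin n) (Fin n) ℝ) (h : ∀ t : ℝ,
      Real.exp (t / 2) ^ M • R (gD t) = ∑ j ∈ Finset.range K, Real.exp (t / 2) ^ j • C j)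
    (t : ℝ) (j : ℕ) (hj : j < K) :
    Real.exp (t / 2) ^ M • (C j * R (gD t)) = Real.exp (t / 2) ^ j • C j := by
  have key := coeff_zero_of_sum K
    (fun j => Real.exp (t / 2) ^ M • (C j * R (gD t)) - Real.exp (t / 2) ^ j • C j) (by
    intro a ha
    have ea : Real.exp ((2 * Real.log a) / 2) = a := by
      rw [mul_div_cancel_left₀ _ two_ne_zero, Real.exp_log ha]
    have h1 := h (2 * Real.log a)
    have h2 := h (2 * Real.log a + t)
    rw [add_div, Real.exp_add, gD_add, map_mul] at h2
    rw [ea] at h1 h2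
    have h3 : (∑ j ∈ Finset.range K, a ^ j • C j) * (Real.exp (t / 2) ^ M • R (gD t))
        = ∑ j ∈ Finset.range K, (a * Real.exp (t / 2)) ^ j • C j := by
      rw [← h1, ← h2]
      simp only [smul_mul_assoc, mul_smul_comm, smul_smul, mul_pow]
      congr 1; ring
    rw [Finset.sum_mul] at h3
    simp only [smul_sub, Finset.sum_sub_distrib]
    rw [sub_eq_zero]
    simp only [smul_mul_assoc, mul_smul_comm, smul_smul, mul_pow] at h3 ⊢
    convert h3 using 3
    ring)
  exact sub_eq_zero.1 (key j hj)

lemma mulVec_zero_of_contract {n : ℕ} (C : Matrix (Fin n) (Fin n) ℝ) (x y : ℕ → Fin n → ℝ)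
    (x0 : Fin n → ℝ) (e : ℕ → ℝ) (hx : Tendsto x atTop (𝓝 x0)) (he : Tendsto e atTop (𝓝 0))
    (B : ℝ) (hy : ∀ k, ‖y k‖ ≤ B) (h : ∀ k, C *ᵥ x k = e k • C *ᵥ y k) : C *ᵥ x0 = 0 := by
  have hc : Continuous fun z : Fin n → ℝ => C *ᵥ z :=
    Continuous.matrix_mulVec continuous_const continuous_id
  have h1 : Tendsto (fun k => e k • y k) atTop (𝓝 0) :=
    he.zero_smul_isBoundedUnder_le (isBoundedUnder_of ⟨B, hy⟩)
  have h2 := (hc.tendsto 0).comp h1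
  rw [Matrix.mulVec_zero] at h2
  refine tendsto_nhds_unique ((hc.tendsto x0).comp hx) (h2.congr fun k => ?_)
  simp [h, Matrix.mulVec_smul]

lemma tendsto_exp_pow {t : ℕ → ℝ} (ht : Tendsto t atTop atTop) {m : ℕ} (hm : m ≠ 0) :
    Tendsto (fun k => Real.exp (-(t k) / 2) ^ m) atTop (𝓝 0) := by
  have h1 : Tendsto (fun k => -(t k) / 2) atTop atBot :=
    (tendsto_neg_atTop_atBot.comp ht).atBot_div_const two_pos
  have := (Real.tendsto_exp_atBot.comp h1).pow m
  simpa [hm] using this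

lemma fixed_of_two {n : ℕ} (R : LorentzGrp 2 →* Matrix (Fin n) (Fin n) ℝ) (hR : Continuous R)
    (x : Fin n → ℝ) (t t' : ℕ → ℝ) (m m' : ℕ → LorentzGrp 2)
    (ht : Tendsto t atTop atTop) (ht' : Tendsto t' atTop atTop)
    (hm : Tendsto m atTop (𝓝 1)) (hm' : Tendsto m' atTop (𝓝 1))
    (B B' : ℝ) (hB : ∀ k, ‖R (gD (-t k)) *ᵥ R (m k) *ᵥ x‖ ≤ B)
    (hB' : ∀ k, ‖R (gD (t' k)) *ᵥ R (m' k) *ᵥ x‖ ≤ B') (s : ℝ) : R (gD s) *ᵥ x = x := by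
  obtain ⟨K, M, C, h⟩ := laurent R hR
  have hp := laurent_proj R K M C h
  have hconv : ∀ m : ℕ → LorentzGrp 2, Tendsto m atTop (𝓝 1) →
      Tendsto (fun k => R (m k) *ᵥ x) atTop (𝓝 x) := by
    intro m hm
    have hc : Continuous fun g => R g *ᵥ x := Continuous.matrix_mulVec hR continuous_const
    have h1 := (hc.tendsto 1).comp hm
    simp only [map_one, Matrix.one_mulVec] at h1
    exact h1
  have hz : ∀ j < K, j ≠ M → C j *ᵥ x = 0 := by
    intro j hj hjM
    rcases lt_or_gt_of_ne hjM with hlt | hgt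
    · refine mulVec_zero_of_contract (C j) _ _ x _ (hconv m hm)
        (tendsto_exp_pow ht (Nat.sub_ne_zero_of_lt hlt)) B hB fun k => ?_
      have h1 := congrArg (fun A => A *ᵥ (R (m k) *ᵥ x)) (hp (-t k) j hj)
      simp only [Matrix.smul_mulVec, ← Matrix.mulVec_mulVec] at h1
      have hpos : Real.exp (-(t k) / 2) ^ j ≠ 0 := by positivity
      apply smul_right_injective _ hpos
      simp only
      rw [← h1, smul_smul, ← pow_add, Nat.add_sub_cancel' hlt.le]
    · refine mulVec_zero_of_contract (C j) _ _ x _ (hconv m' hm')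
        (tendsto_exp_pow ht' (Nat.sub_ne_zero_of_lt hgt)) B' hB' fun k => ?_
      have h1 := congrArg (fun A => A *ᵥ (R (m' k) *ᵥ x)) (hp (t' k) j hj)
      simp only [Matrix.smul_mulVec, ← Matrix.mulVec_mulVec] at h1
      have hpos : Real.exp ((t' k) / 2) ^ j ≠ 0 := by positivity
      apply smul_right_injective _ hpos
      simp only
      rw [← h1, smul_smul]
      congr 1
      obtain ⟨d, rfl⟩ := Nat.exists_eq_add_of_lt hgt
      have e1 : M + d + 1 - M = d + 1 := by omega
      rw [e1, add_assoc, pow_add, mul_assoc, ← mul_pow, ← Real.exp_add]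
      simp [neg_div]
  have hall : ∀ s : ℝ, R (gD s) *ᵥ x = if M < K then C M *ᵥ x else 0 := by
    intro s
    have h1 := congrArg (fun A => A *ᵥ x) (h s)
    simp only [Matrix.smul_mulVec, Matrix.sum_mulVec] at h1
    have hpos : Real.exp (s / 2) ^ M ≠ 0 := by positivity
    apply smul_right_injective _ hpos
    simp only
    rw [h1]
    split_ifs with hMK
    · rw [Finset.sum_eq_single_of_mem M (Finset.mem_range.2 hMK)]
      intro j hj hne
      rw [hz j (Finset.mem_range.1 hj) hne, smul_zero]
    · rw [smul_zero]
      apply Finset.sum_eq_zero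
      intro j hj
      have := Finset.mem_range.1 hj
      rw [hz j this (by omega), smul_zero]
  rw [hall s, ← hall 0, gD_zero]; simp

lemma lmat_J (g : LorentzGrp 2) : (lmat g)ᵀ * mW * lmat g = mW := by
  have H : ∀ x, lorQ 2 (lmat g *ᵥ x) = lorQ 2 x := g.2
  generalize lmat g = M at H
  simp only [lorQ_two] at H
  have h0 := H ![1, 0, 0]
  have h1 := H ![0, 1, 0]
  have h2 := H ![0, 0, 1]
  have h01 := H ![1, 1, 0]
  have h02 := H ![1, 0, 1]
  have h12 := H ![0, 1, 1]
  simp [Matrix.mulVec, dotProduct, Fin.sum_univ_three] at h0 h1 h2 h01 h02 h12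
  ext i j; fin_cases i <;> fin_cases j <;>
    simp [mW, Matrix.mul_apply, Fin.sum_univ_three] <;> linarith

lemma mW_transpose : mWᵀ = mW := by
  ext i j; fin_cases i <;> fin_cases j <;> simp [mW]

lemma basePt_two : basePt 2 = ![1, 0, -1] := by
  ext i; fin_cases i <;> simp [basePt]

lemma stab_orth (g : LorentzGrp 2) (ε : ℝ) (hε : ε ^ 2 = 1)
    (h : lorAct g (basePt 2) = ε • basePt 2) : (lmat g)ᵀ * lmat g = 1 := by
  have hJ := lmat_J g
  rw [lorAct_eq, basePt_two] at h
  set M := lmat g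
  set o : Fin 3 → ℝ := ![1, 0, -1] with ho
  have e1 : (1 : Matrix (Fin 3) (Fin 3) ℝ) = mW + Matrix.vecMulVec (mW *ᵥ o) (mW *ᵥ o) := by
    ext i j; fin_cases i <;> fin_cases j <;>
      simp [mW, Matrix.vecMulVec, Matrix.mulVec, dotProduct, Fin.sum_univ_three, ho]
  have e2 : mW *ᵥ o = ε • (Mᵀ *ᵥ (mW *ᵥ o)) := by
    rw [← Matrix.mulVec_smul, ← Matrix.mulVec_smul, ← h, Matrix.mulVec_mulVec,
      Matrix.mulVec_mulVec, hJ]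
  have e3 : Mᵀ *ᵥ (mW *ᵥ o) = ε • (mW *ᵥ o) := by
    conv_rhs => rw [e2]
    rw [smul_smul, ← pow_two, hε, one_smul]
  calc Mᵀ * M = Mᵀ * (1 : Matrix (Fin 3) (Fin 3) ℝ) * M := by rw [mul_one]
    _ = Mᵀ * mW * M + Matrix.vecMulVec (Mᵀ *ᵥ (mW *ᵥ o)) ((mW *ᵥ o) ᵥ* M) := by
        rw [e1, mul_add, add_mul, Matrix.mul_vecMulVec, Matrix.vecMulVec_mul]
    _ = 1 := by
        rw [hJ, ← Matrix.mulVec_transpose, e3, e1, Matrix.vecMulVec_smul, Matrix.smul_vecMulVec, smul_smul, ← pow_two, hε,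
          one_smul]

def kSet : Set (Matrix (Fin 3) (Fin 3) ℝ) :=
  {M | Mᵀ * M = 1 ∧ ∀ x, lorQ 2 (M *ᵥ x) = lorQ 2 x}

lemma kSet_compact : IsCompact kSet := by
  have hcl : IsClosed kSet := by
    apply IsClosed.inter
    · exact isClosed_eq (by fun_prop) continuous_const
    · have : {M : Matrix (Fin 3) (Fin 3) ℝ | ∀ x, lorQ 2 (M *ᵥ x) = lorQ 2 x}
        = ⋂ x, {M : Matrix (Fin 3) (Fin 3) ℝ | lorQ 2 (M *ᵥ x) = lorQ 2 x} := by
        ext M; simp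
      change IsClosed {M : Matrix (Fin 3) (Fin 3) ℝ | ∀ x, lorQ 2 (M *ᵥ x) = lorQ 2 x}
      rw [this]
      apply isClosed_iInter
      intro x
      apply isClosed_eq _ continuous_const
      simp only [lorQ_two]
      have hc : Continuous fun M : Matrix (Fin 3) (Fin 3) ℝ => M *ᵥ x :=
        Continuous.matrix_mulVec continuous_id continuous_const
      have hi : ∀ i, Continuous fun M : Matrix (Fin 3) (Fin 3) ℝ => (M *ᵥ x) i :=
        fun i => (continuous_apply i).comp hc
      exact ((continuous_const.mul (hi 0)).mul (hi 2)).add ((hi 1).pow 2)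
  have hbox : IsCompact (Set.pi Set.univ fun _ : Fin 3 => Set.pi Set.univ fun _ : Fin 3 =>
      Set.Icc (-1 : ℝ) 1) :=
    isCompact_univ_pi fun _ => isCompact_univ_pi fun _ => isCompact_Icc
  refine IsCompact.of_isClosed_subset hbox hcl ?_
  rintro M ⟨hM, -⟩ i - j -
  have h1 := congrFun (congrFun hM j) j
  simp [Matrix.mul_apply, Fin.sum_univ_three] at h1
  have : M i j ^ 2 ≤ 1 := by
    fin_cases i <;> simp only [Fin.zero_eta, Fin.mk_one, Fin.reduceFinMk] <;> nlinarith [sq_nonneg (M 0 j), sq_nonneg (M 1 j), sq_nonneg (M 2 j)]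
  exact abs_le.1 ((sq_le_one_iff_abs_le_one _).1 this)

def kMap (M : kSet) : LorentzGrp 2 :=
  mkL M.1 M.1ᵀ (mul_eq_one_comm.1 M.2.1) M.2.1 M.2.2

lemma kMap_cont : Continuous kMap :=
  mkL_continuous _ _ _ _ _ continuous_subtype_val (continuous_subtype_val.matrix_transpose)

lemma exists_compact_stab : ∃ S : Set (LorentzGrp 2), IsCompact S ∧
    ∀ (g : LorentzGrp 2) (ε : ℝ), ε ^ 2 = 1 → lorAct g (basePt 2) = ε • basePt 2 → g ∈ S := by
  have : CompactSpace kSet := isCompact_iff_compactSpace.1 kSet_compact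
  refine ⟨Set.range kMap, isCompact_range kMap_cont, fun g ε hε h => ?_⟩
  exact ⟨⟨lmat g, stab_orth g ε hε h, g.2⟩, lmat_ext rfl⟩

lemma bound_of_compact {n : ℕ} (R : LorentzGrp 2 →* Matrix (Fin n) (Fin n) ℝ) (hR : Continuous R)
    (S : Set (LorentzGrp 2)) (hS : IsCompact S) (B : ℝ) :
    ∃ B' : ℝ, ∀ g ∈ S, ∀ y : Fin n → ℝ, ‖y‖ ≤ B → ‖R g *ᵥ y‖ ≤ B' := by
  have hc : Continuous fun z : LorentzGrp 2 × (Fin n → ℝ) => R z.1 *ᵥ z.2 :=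
    Continuous.matrix_mulVec (hR.comp continuous_fst) continuous_snd
  have h1 := (hS.prod (isCompact_closedBall (0 : Fin n → ℝ) B)).image hc
  obtain ⟨B', hB'⟩ := h1.isBounded.exists_norm_le
  refine ⟨B', fun g hg y hy => hB' _ ⟨(g, y), ⟨hg, by simpa using hy⟩, rfl⟩⟩

lemma decomp (g : ℕ → LorentzGrp 2) (lam : ℕ → ℝ) (c : ℝ) (hc : c ≠ 0)
    (hlim : Tendsto (fun k => lam k • lorAct (g k)⁻¹ (basePt 2)) atTop (𝓝 ![c, 0, 0])) :
    ∃ (t : ℕ → ℝ) (m : ℕ → LorentzGrp 2) (ε : ℕ → ℝ), Tendsto t atTop atTop ∧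
      Tendsto m atTop (𝓝 1) ∧ ∀ k, ε k ^ 2 = 1 ∧
        lorAct (gD (-t k) * m k * (g k)⁻¹) (basePt 2) = ε k • basePt 2 := by
  set y : ℕ → Fin 3 → ℝ := fun k => lorAct (g k)⁻¹ (basePt 2) with hy
  have hq : ∀ k, 2 * y k 0 * y k 2 + y k 1 ^ 2 = -2 := by
    intro k
    have := lorQ_act (g k)⁻¹ (basePt 2)
    rw [lorQ_two, lorQ_two, basePt_two] at this
    simp only [hy, basePt_two]
    rw [this]; simp
  have hy0 : ∀ k, y k 0 ≠ 0 := by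
    intro k h0
    have := hq k
    rw [h0] at this
    nlinarith [sq_nonneg (y k 1)]
  have hl := tendsto_pi_nhds.1 hlim
  have hl0 : Tendsto (fun k => lam k * y k 0) atTop (𝓝 c) := by simpa using hl 0
  have hl1 : Tendsto (fun k => lam k * y k 1) atTop (𝓝 0) := by simpa using hl 1
  have hl2 : Tendsto (fun k => lam k * y k 2) atTop (𝓝 0) := by simpa using hl 2
  have hne : ∀ᶠ k in atTop, lam k ≠ 0 := by
    filter_upwards [hl0.eventually_ne hc] with k hk h0
    simp [h0] at hk
  have hd : ∀ i : Fin 3, Tendsto (fun k => lam k * y k i) atTop (𝓝 0) →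
      Tendsto (fun k => y k i / y k 0) atTop (𝓝 0) := by
    intro i hi
    have := hi.div hl0 hc
    rw [zero_div] at this
    refine this.congr' ?_
    filter_upwards [hne] with k hk
    simp only [Pi.div_apply]
    rw [mul_div_mul_left _ _ hk]
  have h1 := hd 1 hl1
  have h2 := hd 2 hl2
  have h3 : Tendsto (fun k => (|y k 0| ^ 2)⁻¹) atTop (𝓝 0) := by
    have := ((h2.const_mul 2).add (h1.pow 2)).const_mul (-1/2)
    simp only [mul_zero, ne_eq, OfNat.ofNat_ne_zero, not_false_eq_true, zero_pow, add_zero] at this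
    refine this.congr fun k => ?_
    have := hq k
    have h0 := hy0 k
    rw [sq_abs]
    field_simp
    linarith
  have h4 : Tendsto (fun k => |y k 0| ^ 2) atTop atTop := by
    have : Tendsto (fun k => (|y k 0| ^ 2)⁻¹) atTop (𝓝[>] 0) := by
      rw [tendsto_nhdsWithin_iff]
      refine ⟨h3, Eventually.of_forall fun k => ?_⟩
      have := hy0 k
      simp only [Set.mem_Ioi]; positivity
    refine (tendsto_inv_nhdsGT_zero.comp this).congr fun k => ?_
    simp only [Function.comp, inv_inv]
  refine ⟨fun k => Real.log |y k 0|, fun k => gL (-(y k 1 / y k 0)),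
    fun k => y k 0 / |y k 0|, ?_, ?_, ?_⟩
  · have := (Real.tendsto_log_atTop.comp h4).atTop_div_const two_pos
    refine this.congr fun k => ?_
    simp [Real.log_pow]
  · have := (gL_cont.tendsto 0).comp (by simpa using h1.neg)
    rw [gL_zero] at this
    exact this
  · intro k
    have h0 := hy0 k
    have ha : 0 < |y k 0| := abs_pos.2 h0
    refine ⟨by rw [div_pow, sq_abs]; field_simp, ?_⟩
    rw [lorAct_mul, lorAct_mul]
    change lorAct _ (lorAct _ (y k)) = _
    have hqk := hq k
    have hsq := sq_abs (y k 0)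
    rw [lorAct_eq, lorAct_eq, lmat_gL, lmat_gD, basePt_two, mD, neg_neg, Real.exp_neg, Real.exp_log ha]
    beta_reduce
    generalize |y k 0| = a at ha hsq
    ext i; fin_cases i
    · simp [mLo, Matrix.mulVec, dotProduct, Fin.sum_univ_three]; field_simp
    · simp [mLo, Matrix.mulVec, dotProduct, Fin.sum_univ_three]; field_simp; simp
    · simp [mLo, Matrix.mulVec, dotProduct, Fin.sum_univ_three]
      field_simp
      linear_combination a ^ 2 * hqk - 2 * hsq

lemma stab1 {n : ℕ} (R : LorentzGrp 2 →* Matrix (Fin n) (Fin n) ℝ) (hR : Continuous R)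
    (x : Fin n → ℝ) (g : ℕ → LorentzGrp 2) (B : ℝ) (hB : ∀ k, ‖R (g k) *ᵥ x‖ ≤ B)
    (lam : ℕ → ℝ) (c : ℝ) (hc : c ≠ 0)
    (hlim : Tendsto (fun k => lam k • lorAct (g k)⁻¹ (basePt 2)) atTop (𝓝 ![c, 0, 0])) :
    ∃ (t : ℕ → ℝ) (m : ℕ → LorentzGrp 2) (B' : ℝ), Tendsto t atTop atTop ∧
      Tendsto m atTop (𝓝 1) ∧ ∀ k, ‖R (gD (-t k)) *ᵥ R (m k) *ᵥ x‖ ≤ B' := by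
  obtain ⟨t, m, ε, ht, hm, h⟩ := decomp g lam c hc hlim
  obtain ⟨S, hS, hS'⟩ := exists_compact_stab
  obtain ⟨B', hB'⟩ := bound_of_compact R hR S hS B
  refine ⟨t, m, B', ht, hm, fun k => ?_⟩
  have := hB' _ (hS' _ _ (h k).1 (h k).2) _ (hB k)
  rw [Matrix.mulVec_mulVec, ← map_mul, inv_mul_cancel_right] at this
  rwa [Matrix.mulVec_mulVec, ← map_mul]

lemma stab2 {n : ℕ} (R : LorentzGrp 2 →* Matrix (Fin n) (Fin n) ℝ) (hR : Continuous R)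
    (x : Fin n → ℝ) (g : ℕ → LorentzGrp 2) (B : ℝ) (hB : ∀ k, ‖R (g k) *ᵥ x‖ ≤ B)
    (lam : ℕ → ℝ) (c : ℝ) (hc : c ≠ 0)
    (hlim : Tendsto (fun k => lam k • lorAct (g k)⁻¹ (basePt 2)) atTop (𝓝 ![0, 0, c])) :
    ∃ (t : ℕ → ℝ) (m : ℕ → LorentzGrp 2) (B' : ℝ), Tendsto t atTop atTop ∧
      Tendsto m atTop (𝓝 1) ∧ ∀ k, ‖R (gD (t k)) *ᵥ R (m k) *ᵥ x‖ ≤ B' := by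
  have hWinv : gW⁻¹ = gW := by rw [inv_eq_iff_mul_eq_one, gW_mul]
  have hl : Tendsto (fun k => lam k • lorAct (g k * gW)⁻¹ (basePt 2)) atTop (𝓝 ![c, 0, 0]) := by
    have := ((lorAct_continuous gW).tendsto _).comp hlim
    have e : lorAct gW ![0, 0, c] = ![c, 0, 0] := by
      rw [lorAct_eq, lmat_gW]
      ext i; fin_cases i <;> simp [mW, Matrix.mulVec, dotProduct, Fin.sum_univ_three]
    rw [e] at this
    refine this.congr fun k => ?_
    simp only [Function.comp]
    rw [lorAct_smul, _root_.mul_inv_rev, hWinv, lorAct_mul]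
  obtain ⟨t, m, B', ht, hm, h⟩ := stab1 R hR (R gW *ᵥ x) (fun k => g k * gW) B (fun k => by
    rw [Matrix.mulVec_mulVec, ← map_mul, mul_assoc, gW_mul, mul_one]; exact hB k) lam c hc hl
  obtain ⟨B2, hB2⟩ := bound_of_compact R hR {gW} isCompact_singleton B'
  refine ⟨t, fun k => gW * m k * gW, B2, ht, ?_, fun k => ?_⟩
  · have hcont : Continuous fun z : LorentzGrp 2 => gW * z * gW := by fun_prop
    have := (hcont.tendsto 1).comp hm
    rw [mul_one, gW_mul] at this
    exact this
  · have := hB2 gW rfl _ (h k)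
    simp only [Matrix.mulVec_mulVec, ← map_mul] at this ⊢
    convert this using 4
    rw [← neg_neg (t k), ← gWD (-t k), neg_neg]
    simp only [mul_assoc]
    rw [← mul_assoc gW gW, gW_mul, one_mul]

lemma two_points {n : ℕ} (R : LorentzGrp 2 →* Matrix (Fin n) (Fin n) ℝ) (hR : Continuous R)
    (x : Fin n → ℝ) (h : LorentzGrp 2) (g g' : ℕ → LorentzGrp 2) (B B' : ℝ)
    (hB : ∀ k, ‖R (g k) *ᵥ x‖ ≤ B) (hB' : ∀ k, ‖R (g' k) *ᵥ x‖ ≤ B')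
    (lam lam' : ℕ → ℝ) (c c' : ℝ) (hc : c ≠ 0) (hc' : c' ≠ 0) (p p' : Fin 3 → ℝ)
    (hlim : Tendsto (fun k => lam k • lorAct (g k)⁻¹ (basePt 2)) atTop (𝓝 p))
    (hlim' : Tendsto (fun k => lam' k • lorAct (g' k)⁻¹ (basePt 2)) atTop (𝓝 p'))
    (hp : lorAct h p = ![c, 0, 0]) (hp' : lorAct h p' = ![0, 0, c']) (s : ℝ) :
    R (h⁻¹ * gD s * h) *ᵥ x = x := by
  have tr : ∀ (g : ℕ → LorentzGrp 2) (lam : ℕ → ℝ) (p r : Fin 3 → ℝ) (_ : lorAct h p = r)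
      (_ : Tendsto (fun k => lam k • lorAct (g k)⁻¹ (basePt 2)) atTop (𝓝 p)),
      Tendsto (fun k => lam k • lorAct (g k * h⁻¹)⁻¹ (basePt 2)) atTop (𝓝 r) := by
    intro g lam p r hp hl
    have := ((lorAct_continuous h).tendsto _).comp hl
    rw [hp] at this
    refine this.congr fun k => ?_
    simp only [Function.comp]
    rw [lorAct_smul, _root_.mul_inv_rev, inv_inv, lorAct_mul]
  obtain ⟨t, m, C, ht, hm, hC⟩ := stab1 R hR (R h *ᵥ x) (fun k => g k * h⁻¹) B (fun k => by
    rw [Matrix.mulVec_mulVec, ← map_mul, inv_mul_cancel_right]; exact hB k) lam c hc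
    (tr g lam p _ hp hlim)
  obtain ⟨t', m', C', ht', hm', hC'⟩ := stab2 R hR (R h *ᵥ x) (fun k => g' k * h⁻¹) B' (fun k => by
    rw [Matrix.mulVec_mulVec, ← map_mul, inv_mul_cancel_right]; exact hB' k) lam' c' hc'
    (tr g' lam' p' _ hp' hlim')
  have := fixed_of_two R hR (R h *ᵥ x) t t' m m' ht ht' hm hm' C C' hC hC' s
  rw [map_mul, map_mul, ← Matrix.mulVec_mulVec, ← Matrix.mulVec_mulVec, this,
    Matrix.mulVec_mulVec, ← map_mul]
  simp

lemma upper_of_col (M : Matrix (Fin 3) (Fin 3) ℝ) (hJ : Mᵀ * mW * M = mW) (hd : 0 < M.det)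
    (h0 : M 0 0 = 1) (h1 : M 1 0 = 0) (h2 : M 2 0 = 0) : M = mU (M 1 2) := by
  have j01 := congrFun (congrFun hJ 0) 1
  have j11 := congrFun (congrFun hJ 1) 1
  have j02 := congrFun (congrFun hJ 0) 2
  have j12 := congrFun (congrFun hJ 1) 2
  have j22 := congrFun (congrFun hJ 2) 2
  simp [mW, Matrix.mul_apply, Fin.sum_univ_three, h0, h1, h2] at j01 j11 j02 j12 j22
  rw [Matrix.det_fin_three] at hd
  simp only [h0, h1, h2, j01, j02] at hd j11 j12 j22
  have e11 : M 1 1 = 1 := by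
    have : (M 1 1 - 1) * (M 1 1 + 1) = 0 := by linarith
    rcases mul_eq_zero.1 this with h | h
    · linarith
    · nlinarith
  rw [e11] at j12
  ext i j; fin_cases i <;> fin_cases j <;> simp [mU, h0, h1, h2, j01, j02, e11] <;> linarith

lemma bigcell (S : Subgroup (LorentzGrp 2)) (hU : ∀ s, gU s ∈ S) (hL : ∀ s, gL s ∈ S)
    (hD : ∀ s, gD s ∈ S) (g : LorentzGrp 2) (h0 : 0 < lmat g 0 0) (hd : 0 < (lmat g).det) :
    g ∈ S := by
  set a := gD (-Real.log (lmat g 0 0)) * gL (-(lmat g 1 0 / lmat g 0 0)) with ha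
  have haS : a ∈ S := S.mul_mem (hD _) (hL _)
  suffices h : a * g ∈ S by simpa using S.mul_mem (S.inv_mem haS) h
  have hdet : (lmat (a * g)).det = (lmat g).det := by
    rw [lmat_mul, ha, lmat_mul, Matrix.det_mul, Matrix.det_mul, lmat_gD, lmat_gL]
    simp [mD, mLo, Matrix.det_fin_three, Real.exp_neg]
  have hJ := lmat_J (a * g)
  have e0 : lmat (a * g) 0 0 = 1 := by
    rw [lmat_mul, ha, lmat_mul, lmat_gD, lmat_gL, mD, neg_neg, Real.exp_neg, Real.exp_log h0]
    simp [mLo, Matrix.mul_apply, Fin.sum_univ_three]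
    field_simp
  have e1 : lmat (a * g) 1 0 = 0 := by
    rw [lmat_mul, ha, lmat_mul, lmat_gD, lmat_gL, mD, neg_neg, Real.exp_neg, Real.exp_log h0]
    simp [mLo, Matrix.mul_apply, Fin.sum_univ_three]
    field_simp
    simp
  have e2 : lmat (a * g) 2 0 = 0 := by
    have := congrFun (congrFun hJ 0) 0
    simp [mW, Matrix.mul_apply, Fin.sum_univ_three, e0, e1] at this
    linarith
  have := upper_of_col _ hJ (by rw [hdet]; exact hd) e0 e1 e2
  have h2 : a * g = gU (lmat (a * g) 1 2) := lmat_ext this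
  rw [h2]
  exact hU _

lemma exists_normalize (p p' : Fin 3 → ℝ) (hp0 : p ≠ 0) (hq : lorQ 2 p = 0) (hq' : lorQ 2 p' = 0)
    (hne : ∀ c : ℝ, p' ≠ c • p) : ∃ (h : LorentzGrp 2) (c c' : ℝ), c ≠ 0 ∧ c' ≠ 0 ∧
      lorAct h p = ![c, 0, 0] ∧ lorAct h p' = ![0, 0, c'] := by
  have s1 : ∃ (h : LorentzGrp 2) (c : ℝ), c ≠ 0 ∧ lorAct h p = ![c, 0, 0] := by
    rw [lorQ_two] at hq
    by_cases h0 : p 0 = 0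
    · have h1 : p 1 = 0 := by simpa [h0] using hq
      refine ⟨gW, p 2, ?_, ?_⟩
      · intro h2
        apply hp0
        ext i; fin_cases i <;> simp [h0, h1, h2]
      · rw [lorAct_eq, lmat_gW]
        ext i; fin_cases i <;> simp [mW, Matrix.mulVec, dotProduct, Fin.sum_univ_three, h0, h1]
    · refine ⟨gL (-(p 1 / p 0)), p 0, h0, ?_⟩
      rw [lorAct_eq, lmat_gL]
      ext i; fin_cases i <;> simp [mLo, Matrix.mulVec, dotProduct, Fin.sum_univ_three]
      · field_simp; simp
      · field_simp; linarith
  obtain ⟨h, c, hc, hp⟩ := s1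
  have hq2 : lorQ 2 (lorAct h p') = 0 := by rw [lorQ_act, hq']
  set y := lorAct h p' with hy
  rw [lorQ_two] at hq2
  have h2 : y 2 ≠ 0 := by
    intro h2
    have h1 : y 1 = 0 := by simpa [h2] using hq2
    apply hne (y 0 / c)
    have : lorAct h p' = lorAct h ((y 0 / c) • p) := by
      rw [lorAct_smul, hp, ← hy]
      ext i; fin_cases i <;> simp [h1, h2, hc]
    rw [← lorAct_inv_eq this, lorAct_inv_eq rfl]
  refine ⟨gU (-(y 1 / y 2)) * h, c, y 2, hc, h2, ?_, ?_⟩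
  · rw [lorAct_mul, hp, lorAct_eq, lmat_gU]
    ext i; fin_cases i <;> simp [mU, Matrix.mulVec, dotProduct, Fin.sum_univ_three]
  · rw [lorAct_mul, ← hy, lorAct_eq, lmat_gU]
    ext i; fin_cases i <;> simp [mU, Matrix.mulVec, dotProduct, Fin.sum_univ_three]
    · field_simp; linarith
    · field_simp; simp

lemma all_of_half (S : Subgroup (LorentzGrp 2)) (φ : ℝ → LorentzGrp 2)
    (hneg : ∀ s, φ (-s) = (φ s)⁻¹) (σ : ℝ) (hσ : σ ≠ 0)
    (h : ∀ s, φ (σ - Real.exp s * σ) ∈ S) (u : ℝ) : φ u ∈ S := by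
  have h1 : ∀ u, u / σ < 1 → φ u ∈ S := by
    intro u hu
    have := h (Real.log (1 - u / σ))
    rw [Real.exp_log (by linarith)] at this
    convert this using 2
    field_simp
    ring
  by_cases hu : u / σ < 1
  · exact h1 u hu
  · have := h1 (-u) (by rw [neg_div]; linarith)
    rw [hneg] at this
    simpa using S.inv_mem this

theorem matrix_version {n : ℕ} (R : LorentzGrp 2 →* Matrix (Fin n) (Fin n) ℝ) (hR : Continuous R)
    (x : Fin n → ℝ)
    (g g' g'' : ℕ → LorentzGrp 2)
    (p p' p'' : Fin 3 → ℝ)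
    (hp0 : p ≠ 0)
    (hq : lorQ 2 p = 0) (hq' : lorQ 2 p' = 0) (hq'' : lorQ 2 p'' = 0)
    (hne1 : ∀ c : ℝ, p' ≠ c • p) (hne2 : ∀ c : ℝ, p'' ≠ c • p)
    (hne3 : ∀ c : ℝ, p'' ≠ c • p')
    (lam lam' lam'' : ℕ → ℝ)
    (hlim : Tendsto (fun k => lam k • lorAct (g k)⁻¹ (basePt 2)) atTop (𝓝 p))
    (hlim' : Tendsto (fun k => lam' k • lorAct (g' k)⁻¹ (basePt 2)) atTop (𝓝 p'))
    (hlim'' : Tendsto (fun k => lam'' k • lorAct (g'' k)⁻¹ (basePt 2)) atTop (𝓝 p''))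
    (B B' B'' : ℝ)
    (hst : ∀ k, ‖R (g k) *ᵥ x‖ ≤ B) (hst' : ∀ k, ‖R (g' k) *ᵥ x‖ ≤ B')
    (hst'' : ∀ k, ‖R (g'' k) *ᵥ x‖ ≤ B'') :
    ∀ h ∈ connectedComponent (1 : LorentzGrp 2), R h *ᵥ x = x := by
  obtain ⟨h, c, c', hc, hc', hp, hp'⟩ := exists_normalize p p' hp0 hq hq' hne1
  let T : Subgroup (LorentzGrp 2) :=
    { carrier := {k | R k *ᵥ x = x}
      one_mem' := by simp
      mul_mem' := by
        intro a b ha hb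
        simp only [Set.mem_ofPred_eq] at ha hb ⊢
        rw [map_mul, ← Matrix.mulVec_mulVec, hb, ha]
      inv_mem' := by
        intro a ha
        simp only [Set.mem_ofPred_eq] at ha ⊢
        conv_lhs => rw [← ha]
        rw [Matrix.mulVec_mulVec, ← map_mul]; simp }
  have memT : ∀ k, k ∈ T ↔ R k *ᵥ x = x := fun k => Iff.rfl
  let S : Subgroup (LorentzGrp 2) := T.comap (MulAut.conj h⁻¹).toMonoidHom
  have memS : ∀ k, k ∈ S ↔ h⁻¹ * k * h ∈ T := by
    intro k
    simp [S, Subgroup.mem_comap]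
  have hD : ∀ s, gD s ∈ S := by
    intro s
    rw [memS, memT]
    exact two_points R hR x h g g' B B' hst hst' lam lam' c c' hc hc' p p' hlim hlim' hp hp' s
  set y := lorAct h p'' with hy
  have hqy : 2 * y 0 * y 2 + y 1 ^ 2 = 0 := by rw [← lorQ_two, hy, lorQ_act, hq'']
  have inj : ∀ {a b : Fin 3 → ℝ}, lorAct h a = lorAct h b → a = b := by
    intro a b hab
    rw [← lorAct_inv_eq hab, lorAct_inv_eq rfl]
  have hy2 : y 2 ≠ 0 := by
    intro h2
    have h1 : y 1 = 0 := by simpa [h2] using hqy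
    apply hne2 (y 0 / c)
    apply inj
    rw [lorAct_smul, hp, ← hy]
    ext i; fin_cases i <;> simp [h1, h2, hc]
  have hy0 : y 0 ≠ 0 := by
    intro h2
    have h1 : y 1 = 0 := by simpa [h2] using hqy
    apply hne3 (y 2 / c')
    apply inj
    rw [lorAct_smul, hp', ← hy]
    ext i; fin_cases i <;> simp [h1, h2, hc']
  have hy1 : y 1 ≠ 0 := by
    intro h1
    have : y 0 * y 2 = 0 := by simpa [h1] using hqy
    rcases mul_eq_zero.1 this with h | h <;> contradiction
  have hUS : ∀ s, gU s ∈ S := by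
    apply all_of_half S gU gU_neg (y 1 / y 2) (div_ne_zero hy1 hy2)
    intro s
    have := two_points R hR x (gU (-(y 1 / y 2)) * h) g g'' B B'' hst hst'' lam lam'' c (y 2) hc hy2
      p p'' hlim hlim'' (by
        rw [lorAct_mul, hp, lorAct_eq, lmat_gU]
        ext i; fin_cases i <;> simp [mU, Matrix.mulVec, dotProduct, Fin.sum_univ_three]) (by
        rw [lorAct_mul, ← hy, lorAct_eq, lmat_gU]
        ext i; fin_cases i <;> simp [mU, Matrix.mulVec, dotProduct, Fin.sum_univ_three]
        · field_simp; linarith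
        · field_simp; simp) s
    have h2 : gU (y 1 / y 2) * gD s * gU (-(y 1 / y 2)) ∈ S := by
      rw [memS, memT]
      convert this using 3
      rw [_root_.mul_inv_rev, gU_neg, inv_inv]
      simp only [mul_assoc]
    have h3 := S.mul_mem h2 (hD (-s))
    convert h3 using 1
    rw [sub_eq_add_neg, gU_add, ← mul_neg, gDU]
    simp only [mul_assoc]
  have hLS : ∀ s, gL s ∈ S := by
    apply all_of_half S gL gL_neg (y 1 / y 0) (div_ne_zero hy1 hy0)
    intro s
    have := two_points R hR x (gL (-(y 1 / y 0)) * h) g'' g' B'' B' hst'' hst' lam'' lam' (y 0) c' hy0 hc'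
      p'' p' hlim'' hlim' (by
        rw [lorAct_mul, ← hy, lorAct_eq, lmat_gL]
        ext i; fin_cases i <;> simp [mLo, Matrix.mulVec, dotProduct, Fin.sum_univ_three]
        · field_simp; simp
        · field_simp; linarith) (by
        rw [lorAct_mul, hp', lorAct_eq, lmat_gL]
        ext i; fin_cases i <;> simp [mLo, Matrix.mulVec, dotProduct, Fin.sum_univ_three]) (-s)
    have h2 : gL (y 1 / y 0) * gD (-s) * gL (-(y 1 / y 0)) ∈ S := by
      rw [memS, memT]
      convert this using 3
      rw [_root_.mul_inv_rev, gL_neg, inv_inv]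
      simp only [mul_assoc]
    have h3 := S.mul_mem h2 (hD s)
    convert h3 using 1
    rw [sub_eq_add_neg, gL_add, ← mul_neg, gDL]
    simp only [mul_assoc]
  have hSo : IsOpen (S : Set (LorentzGrp 2)) := by
    apply Subgroup.isOpen_of_mem_nhds S (g := 1)
    have hO : IsOpen {k : LorentzGrp 2 | 0 < lmat k 0 0 ∧ 0 < (lmat k).det} :=
      (isOpen_lt continuous_const (lmat_continuous.matrix_elem 0 0)).inter
        (isOpen_lt continuous_const lmat_continuous.matrix_det)
    refine mem_of_superset (hO.mem_nhds ?_) ?_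
    · simp [lmat_one]
    · rintro k ⟨hk, hk'⟩
      exact bigcell S hUS hLS hD k hk hk'
  have hcl : IsClopen (S : Set (LorentzGrp 2)) := ⟨S.isClosed_of_isOpen hSo, hSo⟩
  intro k hk
  have hcont : Continuous fun z : LorentzGrp 2 => h * z * h⁻¹ := by fun_prop
  have hpre : IsClopen ((fun z : LorentzGrp 2 => h * z * h⁻¹) ⁻¹' (S : Set (LorentzGrp 2))) :=
    hcl.preimage hcont
  have hk2 := hpre.connectedComponent_subset (x := 1) (by simp [S.one_mem]) hk
  have hk3 : h * k * h⁻¹ ∈ S := hk2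
  rw [memS] at hk3
  have e : h⁻¹ * (h * k * h⁻¹) * h = k := by group
  rw [e] at hk3
  exact hk3

/-- (`O(1,2)` acting on `ℝ³` with `q(x) = 2x₁x₃ + x₂²`.) If three sequences in
`O(1,2)` have `λ_k • g_k⁻¹(o)` converging to three pairwise non-proportional lightlike vectors
`p, p', p''`, then every vector stable under each of the three sequences is fixed by the identity
component of `O(1,2)`. -/
theorem stable_vector_fixed_by_identity_component_O12
    (V : Type*) [NormedAddCommGroup V] [NormedSpace ℝ V] [FiniteDimensional ℝ V]
    (ρ : LorentzGrp 2 →* (V →L[ℝ] V)) (hρ : Continuous fun g => ρ g)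
    (g g' g'' : ℕ → LorentzGrp 2)
    (p p' p'' : Fin 3 → ℝ)
    (hp0 : p ≠ 0) (hp0' : p' ≠ 0) (hp0'' : p'' ≠ 0)
    (hq : lorQ 2 p = 0) (hq' : lorQ 2 p' = 0) (hq'' : lorQ 2 p'' = 0)
    (hne1 : ∀ c : ℝ, p' ≠ c • p) (hne2 : ∀ c : ℝ, p'' ≠ c • p)
    (hne3 : ∀ c : ℝ, p'' ≠ c • p')
    (lam lam' lam'' : ℕ → ℝ)
    (hlim : Tendsto (fun k => lam k • lorAct (g k)⁻¹ (basePt 2)) atTop (𝓝 p))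
    (hlim' : Tendsto (fun k => lam' k • lorAct (g' k)⁻¹ (basePt 2)) atTop (𝓝 p'))
    (hlim'' : Tendsto (fun k => lam'' k • lorAct (g'' k)⁻¹ (basePt 2)) atTop (𝓝 p''))
    (v : V)
    (hst : IsStableVec ρ (Set.range g) v)
    (hst' : IsStableVec ρ (Set.range g') v)
    (hst'' : IsStableVec ρ (Set.range g'') v) :
    ∀ h ∈ connectedComponent (1 : LorentzGrp 2), ρ h v = v := by
  let bas := Module.finBasis ℝ V
  let R : LorentzGrp 2 →* Matrix (Fin (Module.finrank ℝ V)) (Fin (Module.finrank ℝ V)) ℝ :=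
    { toFun := fun g => LinearMap.toMatrix bas bas (ρ g : V →ₗ[ℝ] V)
      map_one' := by
        rw [map_one]
        exact LinearMap.toMatrix_one bas
      map_mul' := fun a b => by
        rw [map_mul]
        exact LinearMap.toMatrix_mul bas _ _ }
  have hRa : ∀ k w, R k *ᵥ (bas.equivFunL w) = bas.equivFunL (ρ k w) := fun k w =>
    LinearMap.toMatrix_mulVec_repr bas bas (ρ k : V →ₗ[ℝ] V) w
  have hR : Continuous R := by
    refine continuous_matrix fun i j => ?_
    have e : ∀ k, R k i j = bas.equivFunL (ρ k (bas j)) i := fun k =>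
      LinearMap.toMatrix_apply bas bas (ρ k : V →ₗ[ℝ] V) i j
    simp only [e]
    exact (continuous_apply i).comp (bas.equivFunL.continuous.comp (hρ.clm_apply continuous_const))
  have bd : ∀ g : ℕ → LorentzGrp 2, IsStableVec ρ (Set.range g) v →
      ∃ B : ℝ, ∀ k, ‖R (g k) *ᵥ (bas.equivFunL v)‖ ≤ B := by
    intro g hg
    obtain ⟨B, hB⟩ := Bornology.IsBounded.exists_norm_le hg
    refine ⟨‖(bas.equivFunL : V →L[ℝ] (Fin (Module.finrank ℝ V) → ℝ))‖ * B, fun k => ?_⟩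
    rw [hRa]
    refine ((bas.equivFunL : V →L[ℝ] (Fin (Module.finrank ℝ V) → ℝ)).le_opNorm _).trans ?_
    exact mul_le_mul_of_nonneg_left (hB _ ⟨g k, ⟨k, rfl⟩, rfl⟩) (norm_nonneg _)
  obtain ⟨B, hB⟩ := bd g hst
  obtain ⟨B', hB'⟩ := bd g' hst'
  obtain ⟨B'', hB''⟩ := bd g'' hst''
  intro h hh
  have := matrix_version R hR (bas.equivFunL v) g g' g'' p p' p'' hp0 hq hq' hq'' hne1 hne2 hne3
    lam lam' lam'' hlim hlim' hlim'' B B' B'' hB hB' hB'' h hh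
  rw [hRa] at this
  exact bas.equivFunL.injective this
end
end

section
/- Let n ≥ 2. There is no coarse embedding from the Euclidean space ℝⁿ into the real hyperbolic space ℍⁿ, realized as the hyperboloid model: there is no map α : ℝⁿ → ℍⁿ together with nondecreasing functions φ⁻, φ⁺ : [0,∞) → ℝ tending to +∞ such that φ⁻(‖x − y‖) ≤ d_H(α(x), α(y)) ≤ φ⁺(‖x − y‖) for all x, y ∈ ℝⁿ. -/
open Filter Set

noncomputable section

/-- The Minkowski bilinear form `B(x,y) = −x₀y₀ + x₁y₁ + ⋯ + xₙyₙ` on `ℝ^{n+1}`. -/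
def minkB (n : ℕ) (x y : Fin (n + 1) → ℝ) : ℝ :=
  -(x 0 * y 0) + ∑ i : Fin (n + 1), if i ≠ 0 then x i * y i else 0

/-- The hyperboloid model of real hyperbolic `n`-space:
`ℍⁿ = {x ∈ ℝ^{n+1} : B(x,x) = −1, x₀ > 0}`. -/
def HypSet (n : ℕ) : Set (Fin (n + 1) → ℝ) := {x | minkB n x x = -1 ∧ 0 < x 0}

/-- The inverse hyperbolic cosine, `arcosh x = log (x + √(x² − 1))`. -/
def arcosh (x : ℝ) : ℝ := Real.log (x + Real.sqrt (x ^ 2 - 1))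

/-- The hyperbolic distance on the hyperboloid model: `d_H(x,y) = arcosh (−B(x,y))`. -/
def dHyp (n : ℕ) (x y : Fin (n + 1) → ℝ) : ℝ := arcosh (-(minkB n x y))

/-- A coarse embedding relatively to given distance functions `dX` and `dY`. -/
def IsCoarseEmbeddingWrt {X Y : Type*} (dX : X → X → ℝ) (dY : Y → Y → ℝ) (α : X → Y) : Prop :=
  ∃ φm φp : ℝ → ℝ,
    MonotoneOn φm (Set.Ici 0) ∧ MonotoneOn φp (Set.Ici 0) ∧
    Tendsto φm atTop atTop ∧ Tendsto φp atTop atTop ∧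
    ∀ x y : X, φm (dX x y) ≤ dY (α x) (α y) ∧ dY (α x) (α y) ≤ φp (dX x y)

theorem ce_inner_P {E : Type*} [NormedAddCommGroup E] [InnerProductSpace ℝ E]
    (u v w : E) (s a b : ℝ) (hs : 0 < s) (hsu : s ^ 2 = 1 + ‖u‖ ^ 2) :
    inner ℝ (v + ((inner ℝ u v) / (1 + s) - a) • u) (w + ((inner ℝ u w) / (1 + s) - b) • u)
      = (s * a - inner ℝ u v) * (s * b - inner ℝ u w) - (a * b - inner ℝ v w) := by
  have h1 : (1 + s) ≠ 0 := by positivity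
  have h2 : ‖u‖ ^ 2 = s ^ 2 - 1 := by linarith
  simp only [inner_add_left, inner_add_right, inner_smul_left, inner_smul_right,
    real_inner_self_eq_norm_sq, h2, real_inner_comm u v, conj_trivial]
  field_simp
  ring

theorem ce_center {E : Type*} [NormedAddCommGroup E] [InnerProductSpace ℝ E]
    [FiniteDimensional ℝ E] {ι : Type*} [Fintype ι] [Nonempty ι] (a : ι → ℝ) (v : ι → E)
    (ha : ∀ x, 0 < a x) (hav : ∀ x, a x ^ 2 = 1 + ‖v x‖ ^ 2) :
    ∃ (c : ι → ℝ) (k : ι → E), (∀ x, 1 ≤ c x) ∧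
      (∀ x y, inner ℝ (k x) (k y) = 1 - (a x * a y - inner ℝ (v x) (v y)) / (c x * c y)) ∧
      ∑ x, k x = 0 := by
  set s : E → ℝ := fun u => √(1 + ‖u‖ ^ 2) with hs
  have hspos : ∀ u, 0 < s u := fun u => by simp only [hs]; positivity
  have hssq : ∀ u, s u ^ 2 = 1 + ‖u‖ ^ 2 := fun u => by
    simp only [hs]; rw [Real.sq_sqrt (by positivity)]
  have hsn : ∀ u, ‖u‖ ≤ s u := fun u => by
    apply Real.le_sqrt_of_sq_le; linarith
  have hva : ∀ x, ‖v x‖ < a x := fun x => by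
    apply lt_of_pow_lt_pow_left₀ 2 (ha x).le; linarith [hav x]
  have hlow : ∀ u x, s u * (a x - ‖v x‖) ≤ s u * a x - inner ℝ u (v x) := fun u x => by
    have := real_inner_le_norm u (v x)
    have h2 := mul_le_mul_of_nonneg_right (hsn u) (norm_nonneg (v x))
    linarith
  have hpos : ∀ u x, 0 < s u * a x - inner ℝ u (v x) := fun u x =>
    lt_of_lt_of_le (mul_pos (hspos u) (by linarith [hva x])) (hlow u x)
  set G : E → ℝ := fun u => ∑ x, Real.log (s u * a x - inner ℝ u (v x)) with hG
  have hcont : Continuous G := by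
    apply continuous_finsetSum
    intro x _
    apply Continuous.log
    · simp only [hs]; fun_prop
    · intro u; exact (hpos u x).ne'
  have hstend : Tendsto s (cocompact E) atTop :=
    tendsto_atTop_mono hsn (tendsto_norm_cocompact_atTop (E := E))
  have htend : Tendsto G (cocompact E) atTop := by
    have h1 : Tendsto (fun u => (Fintype.card ι : ℝ) * Real.log (s u)
        + ∑ x, Real.log (a x - ‖v x‖)) (cocompact E) atTop := by
      apply tendsto_atTop_add_const_right
      apply Tendsto.const_mul_atTop
      · exact_mod_cast Fintype.card_pos
      · exact Real.tendsto_log_atTop.comp hstend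
    refine tendsto_atTop_mono ?_ h1
    intro u
    have : (Fintype.card ι : ℝ) * Real.log (s u) = ∑ x : ι, Real.log (s u) := by simp
    rw [this, ← Finset.sum_add_distrib]
    apply Finset.sum_le_sum
    intro x _
    have h3 : 0 < a x - ‖v x‖ := by linarith [hva x]
    rw [← Real.log_mul (hspos u).ne' h3.ne']
    exact Real.log_le_log (mul_pos (hspos u) h3) (hlow u x)
  obtain ⟨u, hu⟩ := hcont.exists_forall_le htend
  set c : ι → ℝ := fun x => s u * a x - inner ℝ u (v x) with hc
  set P : ι → E := fun x => v x + ((inner ℝ u (v x)) / (1 + s u) - a x) • u with hP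
  have hPP : ∀ x y, inner ℝ (P x) (P y) = c x * c y - (a x * a y - inner ℝ (v x) (v y)) :=
    fun x y => ce_inner_P u (v x) (v y) (s u) (a x) (a y) (hspos u) (hssq u)
  have hcpos : ∀ x, 0 < c x := fun x => hpos u x
  have hder : ∀ w : E, ∑ x, ((inner ℝ u w / s u) * a x - inner ℝ w (v x)) / c x = 0 := by
    intro w
    have hl : HasDerivAt (fun t : ℝ => u + t • w) w 0 := by
      simpa using ((hasDerivAt_id (0:ℝ)).smul_const w).const_add u
    have hsd : HasDerivAt (fun t : ℝ => s (u + t • w)) (inner ℝ u w / s u) 0 := by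
      have h1 := (hl.norm_sq.const_add 1).sqrt (by positivity)
      simp only [zero_smul, add_zero] at h1
      convert h1 using 1
      simp only [hs]
      field_simp
    have hGd : HasDerivAt (fun t : ℝ => G (u + t • w))
        (∑ x, ((inner ℝ u w / s u) * a x - inner ℝ w (v x)) / c x) 0 := by
      simp only [hG]
      apply HasDerivAt.fun_sum
      intro x _
      have h2 : HasDerivAt (fun t : ℝ => (inner ℝ (u + t • w) (v x) : ℝ)) (inner ℝ w (v x)) 0 := by
        simpa using hl.inner ℝ (hasDerivAt_const (0:ℝ) (v x))
      have h3 := ((hsd.mul_const (a x)).sub h2).log (by simpa using (hpos u x).ne')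
      simpa using h3
    have hmin : IsLocalMin (fun t : ℝ => G (u + t • w)) 0 := by
      apply Filter.Eventually.of_forall
      intro t
      simpa using hu (u + t • w)
    exact hmin.hasDerivAt_eq_zero hGd
  set q : E := ∑ x, (c x)⁻¹ • (v x - (a x / s u) • u) with hq
  have hq0 : q = 0 := by
    apply ext_inner_left ℝ
    intro w
    rw [inner_zero_right, hq, inner_sum, ← neg_eq_zero, ← hder w, ← Finset.sum_neg_distrib]
    apply Finset.sum_congr rfl
    intro x _
    rw [inner_smul_right, inner_sub_right, inner_smul_right, real_inner_comm u w]
    have := (hcpos x).ne'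
    field_simp
    ring
  refine ⟨c, fun x => (c x)⁻¹ • P x, ?_, ?_, ?_⟩
  · intro x
    have h1 := hPP x x
    have h2 : 0 ≤ inner ℝ (P x) (P x) := real_inner_self_nonneg
    rw [real_inner_self_eq_norm_sq (v x)] at h1
    nlinarith [hav x, hcpos x]
  · intro x y
    rw [inner_smul_left, inner_smul_right, hPP]
    have := (hcpos x).ne'
    have := (hcpos y).ne'
    simp only [conj_trivial]
    field_simp
  · have hPq : ∀ x, (c x)⁻¹ • P x = (c x)⁻¹ • (v x - (a x / s u) • u)
        + (inner ℝ u ((c x)⁻¹ • (v x - (a x / s u) • u)) / (1 + s u)) • u := by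
      intro x
      have h1 : (1 + s u) ≠ 0 := by linarith [hspos u]
      have h2 : ‖u‖ ^ 2 = s u ^ 2 - 1 := by linarith [hssq u]
      have h3 := (hspos u).ne'
      have h4 := (hcpos x).ne'
      simp only [hP, inner_smul_right, inner_sub_right, real_inner_self_eq_norm_sq, h2]
      match_scalars
      · field_simp
      · field_simp
        ring
    simp_rw [hPq]
    rw [Finset.sum_add_distrib, ← Finset.sum_smul, ← Finset.sum_div, ← inner_sum, ← hq, hq0]
    simp

theorem ce_line {E : Type*} [NormedAddCommGroup E] (N : ℕ) (g : Fin N → E) (e : Fin N → ℝ)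
    (he : ∀ x, 0 ≤ e x)
    (h : ∀ a b : Fin N, (b : ℕ) = a + 1 → ‖g a - g b‖ ≤ e a) (a b : Fin N) :
    ‖g a - g b‖ ≤ ∑ t, e t := by
  wlog hab : a ≤ b generalizing a b
  · rw [norm_sub_rev]; exact this b a (le_of_not_ge hab)
  have key : ∀ d : ℕ, ∀ b : Fin N, (b : ℕ) = a + d → ‖g a - g b‖ ≤ ∑ t ∈ Finset.univ.filter (fun t => t < b), e t := by
    intro d
    induction d with
    | zero =>
      intro b hb
      have : a = b := Fin.ext (by omega)
      subst this
      simpa using Finset.sum_nonneg (fun t _ => he t)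
    | succ d ih =>
      intro b hb
      let b' : Fin N := ⟨a + d, by omega⟩
      have h1 := ih b' rfl
      have h2 := h b' b (by simp [b']; omega)
      have h3 : Finset.univ.filter (fun t => t < b) = insert b' (Finset.univ.filter (fun t => t < b')) := by
        ext t; simp only [Finset.mem_filter, Finset.mem_univ, true_and, Finset.mem_insert, Fin.lt_def, Fin.ext_iff, b']; omega
      rw [h3, Finset.sum_insert (by simp)]
      have := norm_sub_le_norm_sub_add_norm_sub (g a) (g b') (g b)
      linarith
  refine (key (b - a) b (by have : (a:ℕ) ≤ b := hab; omega)).trans ?_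
  exact Finset.sum_le_sum_of_subset_of_nonneg (Finset.subset_univ _) (fun t _ _ => he t)

theorem ce_poincare {E : Type*} [NormedAddCommGroup E] (N : ℕ) (n : ℕ) :
    ∀ (f : (Fin n → Fin N) → E) (e : (Fin n → Fin N) → ℝ), (∀ x, 0 ≤ e x) →
    (∀ x y : Fin n → Fin N, ∀ i, (∀ j, j ≠ i → x j = y j) → ((y i : ℕ) = x i + 1) →
      ‖f x - f y‖ ≤ e x) →
    ∑ x, ∑ y, ‖f x - f y‖ ≤ n * (N : ℝ) ^ (n + 1) * ∑ x, e x := by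
  induction n with
  | zero => intro f e he h; simp
  | succ n ih =>
    intro f e he h
    have hsum : ∀ F : (Fin (n+1) → Fin N) → ℝ,
        ∑ x, F x = ∑ a : Fin N, ∑ x' : Fin n → Fin N, F (Fin.cons a x') := by
      intro F
      rw [← (Fin.consEquiv (fun _ => Fin N)).sum_comp, Fintype.sum_prod_type]
      rfl
    simp only [hsum]
    have h1 : ∀ x' : Fin n → Fin N, ∀ a b : Fin N,
        ‖f (Fin.cons a x') - f (Fin.cons b x')‖ ≤ ∑ t, e (Fin.cons t x') := by
      intro x' a b
      apply ce_line N (fun t => f (Fin.cons t x')) (fun t => e (Fin.cons t x')) (fun t => he _)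
      intro a b hab
      apply h _ _ 0
      · intro j hj
        obtain ⟨j, rfl⟩ := Fin.exists_succ_eq.2 hj
        simp
      · simpa using hab
    have h2 : ∀ b : Fin N, ∑ x' : Fin n → Fin N, ∑ y', ‖f (Fin.cons b x') - f (Fin.cons b y')‖
        ≤ n * (N : ℝ) ^ (n + 1) * ∑ x', e (Fin.cons b x') := by
      intro b
      apply ih (fun x' => f (Fin.cons b x')) (fun x' => e (Fin.cons b x')) (fun t => he _)
      intro x y i hij hi
      apply h _ _ i.succ
      · intro j
        refine Fin.cases ?_ (fun j => ?_) j
        · intro; simp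
        · intro hj; simpa using hij j (fun hh => hj (by rw [hh]))
      · simpa using hi
    calc ∑ a : Fin N, ∑ x' : Fin n → Fin N, ∑ b : Fin N, ∑ y' : Fin n → Fin N,
          ‖f (Fin.cons a x') - f (Fin.cons b y')‖
        ≤ ∑ a : Fin N, ∑ x' : Fin n → Fin N, ∑ b : Fin N, ∑ y' : Fin n → Fin N,
          (∑ t, e (Fin.cons t x') + ‖f (Fin.cons b x') - f (Fin.cons b y')‖) := by
          gcongr with a _ x' _ b _ y' _
          refine (norm_sub_le_norm_sub_add_norm_sub _ (f (Fin.cons b x')) _).trans ?_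
          gcongr
          exact h1 x' a b
      _ = (N : ℝ) ^ (n + 2) * ∑ x' : Fin n → Fin N, ∑ t, e (Fin.cons t x')
          + N * ∑ b : Fin N, ∑ x' : Fin n → Fin N, ∑ y', ‖f (Fin.cons b x') - f (Fin.cons b y')‖ := by
          simp only [Finset.sum_add_distrib, Finset.sum_const, Finset.card_univ, Fintype.card_fin,
            Fintype.card_fun, nsmul_eq_mul, ← Finset.mul_sum]
          rw [Finset.sum_comm (s := (Finset.univ : Finset (Fin n → Fin N))) (t := (Finset.univ : Finset (Fin N))) (f := fun x' b => ∑ y', ‖f (Fin.cons b x') - f (Fin.cons b y')‖)]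
          push_cast
          ring
      _ ≤ (N : ℝ) ^ (n + 2) * ∑ x' : Fin n → Fin N, ∑ t, e (Fin.cons t x')
          + N * ∑ b : Fin N, (n * (N : ℝ) ^ (n + 1) * ∑ x', e (Fin.cons b x')) := by
          gcongr with b _
          exact h2 b
      _ = _ := by
          rw [← Finset.mul_sum, Finset.sum_comm]
          push_cast
          ring

theorem ce_edge {E : Type*} [NormedAddCommGroup E] [InnerProductSpace ℝ E]
    (k k' : E) (c c' D D0 : ℝ) (hc : 1 ≤ c) (hc' : 1 ≤ c')
    (hk : ‖k‖ ^ 2 = 1 - 1 / c ^ 2) (hk' : ‖k'‖ ^ 2 = 1 - 1 / c' ^ 2)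
    (hkk : inner ℝ k k' = 1 - D / (c * c')) (hD : D ≤ D0) (hD1 : 1 ≤ D0) :
    ‖k - k'‖ ≤ 2 * D0 * (1 / c) := by
  have h0 := norm_sub_sq_real k k'
  rw [hk, hk', hkk] at h0
  have hcp : 0 < c := by linarith
  have hcp' : 0 < c' := by linarith
  have h1 : ‖k - k'‖ ^ 2 * (c ^ 2 * c' ^ 2) = 2 * D * (c * c') - c ^ 2 - c' ^ 2 := by
    rw [h0]; field_simp; ring
  have h2 : 0 ≤ ‖k - k'‖ ^ 2 * (c ^ 2 * c' ^ 2) := by positivity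
  have h3 : D * (c * c') ≤ D0 * (c * c') := by gcongr
  have h4 : c ≤ 2 * D0 * c' := by
    have : c * c ≤ c * (2 * D0 * c') := by nlinarith [sq_nonneg c']
    exact le_of_mul_le_mul_left this hcp
  have h5 : ‖k - k'‖ ^ 2 * (c * c') ≤ 2 * D0 := by
    have : (‖k - k'‖ ^ 2 * (c * c')) * (c * c') ≤ (2 * D0) * (c * c') := by
      nlinarith [sq_nonneg c', sq_nonneg c]
    exact le_of_mul_le_mul_right this (by positivity)
  apply le_of_sq_le_sq _ (by positivity)
  have h6 : ‖k - k'‖ ^ 2 * c * c ≤ (2 * D0) * (2 * D0) := by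
    calc ‖k - k'‖ ^ 2 * c * c ≤ ‖k - k'‖ ^ 2 * c * (2 * D0 * c') := by gcongr
      _ = (‖k - k'‖ ^ 2 * (c * c')) * (2 * D0) := by ring
      _ ≤ _ := by gcongr
  rw [show (2 * D0 * (1 / c)) ^ 2 = (2 * D0) * (2 * D0) / (c * c) by field_simp]
  rw [le_div_iff₀ (by positivity)]
  linarith

theorem ce_shell (m : ℕ) {ι : Type*} (k : ι → EuclideanSpace ℝ (Fin (m + 1)))
    (T : Finset ι) (h : ℝ) (hh : 1 ≤ h)
    (hk1 : ∀ x ∈ T, ‖k x‖ ≤ 1) (hk2 : ∀ x ∈ T, 1 - 1 / h ≤ ‖k x‖)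
    (hsep : ∀ x ∈ T, ∀ y ∈ T, x ≠ y → 2 / h ≤ ‖k x - k y‖) :
    (T.card : ℝ) ≤ 3 * (m + 1) * 2 ^ m * h ^ m := by
  have hp : 0 < h := by linarith
  set r : ℝ := max 0 (1 - 2 / h) with hr
  have hr0 : 0 ≤ r := le_max_left _ _
  let μ : MeasureTheory.Measure (EuclideanSpace ℝ (Fin (m + 1))) := MeasureTheory.volume
  have hvol : ∀ (x : EuclideanSpace ℝ (Fin (m + 1))) (r : ℝ), 0 ≤ r →
      μ.real (Metric.ball x r) = r ^ (m + 1) * μ.real (Metric.ball 0 1) := by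
    intro x r hr
    have := MeasureTheory.Measure.addHaar_ball μ x hr
    rw [MeasureTheory.measureReal_def, MeasureTheory.measureReal_def, this, ENNReal.toReal_mul,
      ENNReal.toReal_ofReal (by positivity)]
    simp
  have hb1 : 0 < μ.real (Metric.ball (0 : EuclideanSpace ℝ (Fin (m + 1))) 1) := by
    rw [MeasureTheory.measureReal_def]
    exact ENNReal.toReal_pos (Metric.measure_ball_pos _ _ one_pos).ne' MeasureTheory.measure_ball_lt_top.ne
  have hdis : (T : Set ι).PairwiseDisjoint (fun x => Metric.ball (k x) (1 / h)) := by
    intro x hx y hy hxy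
    apply Metric.ball_disjoint_ball
    rw [dist_eq_norm]
    have := hsep x hx y hy hxy
    rw [← add_div]; norm_num; exact this
  have hdis0 : Disjoint (⋃ x ∈ T, Metric.ball (k x) (1 / h)) (Metric.ball 0 r) := by
    simp only [Set.disjoint_iUnion_left]
    intro x hx
    rcases le_total (1 - 2 / h) 0 with h0 | h0
    · rw [hr, max_eq_left h0]; simp
    · apply Metric.ball_disjoint_ball
      rw [dist_zero_right, hr, max_eq_right h0]
      have := hk2 x hx
      have h2 : 2 / h = 1 / h + 1 / h := by ring
      linarith
  have hsub : (⋃ x ∈ T, Metric.ball (k x) (1 / h)) ∪ Metric.ball 0 r ⊆ Metric.ball 0 (1 + 1 / h) := by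
    apply Set.union_subset
    · apply Set.iUnion₂_subset
      intro x hx
      apply Metric.ball_subset_ball'
      rw [dist_zero_right]; linarith [hk1 x hx]
    · apply Metric.ball_subset_ball
      apply max_le
      · positivity
      · have : 0 < 1 / h := by positivity
        have h2 : 2 / h = 1 / h + 1 / h := by ring
        linarith
  have hm := MeasureTheory.measureReal_mono (μ := μ) hsub MeasureTheory.measure_ball_lt_top.ne
  have hfin : μ (⋃ x ∈ T, Metric.ball (k x) (1 / h)) ≠ ⊤ :=
    ((MeasureTheory.measure_mono (Set.subset_union_left.trans hsub)).trans_lt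
      MeasureTheory.measure_ball_lt_top).ne
  rw [MeasureTheory.measureReal_union hdis0 measurableSet_ball hfin MeasureTheory.measure_ball_lt_top.ne,
    MeasureTheory.measureReal_biUnion_finset hdis (fun _ _ => measurableSet_ball)
      (fun _ _ => MeasureTheory.measure_ball_lt_top.ne)] at hm
  rw [hvol 0 r hr0, hvol 0 (1 + 1 / h) (by positivity),
    Finset.sum_congr rfl (fun x _ => hvol (k x) (1 / h) (by positivity)),
    Finset.sum_const, nsmul_eq_mul, ← mul_assoc, ← add_mul] at hm
  have hm2 := le_of_mul_le_mul_right hm hb1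
  have hle : 1 / h ≤ 1 := by rw [div_le_one hp]; exact hh
  have h3 : (1 + 1 / h) - r ≤ 3 / h := by
    have h1 : 1 - 2 / h ≤ r := le_max_right _ _
    have h2 : 3 / h = 1 / h + 2 / h := by ring
    linarith
  have hrle : r ≤ 1 + 1 / h := by
    apply max_le
    · positivity
    · have : 0 < 1 / h := by positivity
      have h2 : 2 / h = 1 / h + 1 / h := by ring
      linarith
  have h4 := abs_pow_sub_pow_le (1 + 1 / h) r (m + 1)
  have h5 : (1 + 1 / h) ^ (m + 1) - r ^ (m + 1) ≤ 3 / h * (m + 1) * 2 ^ m := by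
    refine (le_abs_self _).trans (h4.trans ?_)
    rw [abs_of_nonneg (by linarith : (0:ℝ) ≤ 1 + 1 / h - r), abs_of_nonneg (by positivity : (0:ℝ) ≤ 1 + 1/h),
      abs_of_nonneg hr0, max_eq_left hrle]
    simp only [Nat.add_sub_cancel]
    push_cast
    gcongr
    linarith
  have h6 : (T.card : ℝ) * (1 / h) ^ (m + 1) ≤ 3 / h * (m + 1) * 2 ^ m := by linarith
  have h7 : (T.card : ℝ) = (T.card : ℝ) * (1 / h) ^ (m + 1) * h ^ (m + 1) := by
    rw [one_div, inv_pow]; field_simp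
  rw [h7]
  calc _ ≤ 3 / h * (m + 1) * 2 ^ m * h ^ (m + 1) := by gcongr
    _ = _ := by rw [pow_succ]; field_simp

theorem ce_count (m : ℕ) (hm : 1 ≤ m) {ι : Type*} [Fintype ι] (c : ι → ℝ) (D : ι → ι → ℝ)
    (k : ι → EuclideanSpace ℝ (Fin (m + 1))) (hc : ∀ x, 1 ≤ c x)
    (hk : ∀ x y, inner ℝ (k x) (k y) = 1 - D x y / (c x * c y))
    (hD1 : ∀ x, D x x = 1) (hD : ∀ x y, x ≠ y → 12 ≤ D x y) (J : ℕ) :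
    ((Finset.univ.filter (fun x => c x < 2 ^ J)).card : ℝ)
      ≤ (3 * (m + 1) * 2 ^ m) * (2 ^ J) ^ m := by
  have hnorm : ∀ x, ‖k x‖ ^ 2 = 1 - 1 / c x ^ 2 := by
    intro x
    rw [← real_inner_self_eq_norm_sq, hk, hD1, sq]
  induction J with
  | zero =>
    have : Finset.univ.filter (fun x => c x < 2 ^ 0) = ∅ := by
      ext x; simpa using hc x
    rw [this]; simp; positivity
  | succ J ih =>
    set h : ℝ := 2 ^ J with hh
    have h1 : 1 ≤ h := one_le_pow₀ (by norm_num)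
    have hp : 0 < h := by linarith
    classical
    set T := Finset.univ.filter (fun x => h ≤ c x ∧ c x < 2 * h) with hT
    have hsub : Finset.univ.filter (fun x => c x < 2 ^ (J + 1)) ⊆
        Finset.univ.filter (fun x => c x < h) ∪ T := by
      intro x
      simp only [hT, Finset.mem_filter, Finset.mem_univ, true_and, Finset.mem_union]
      intro hx
      rcases lt_or_ge (c x) h with h2 | h2
      · exact Or.inl h2
      · exact Or.inr ⟨h2, by rw [pow_succ, mul_comm] at hx; exact hx⟩
    have hcard : ((Finset.univ.filter (fun x => c x < 2 ^ (J + 1))).card : ℝ) ≤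
        (Finset.univ.filter (fun x => c x < h)).card + T.card := by
      exact_mod_cast (Finset.card_le_card hsub).trans (Finset.card_union_le _ _)
    have hTc : (T.card : ℝ) ≤ 3 * (m + 1) * 2 ^ m * h ^ m := by
      apply ce_shell m k T h h1
      · intro x _
        have h2 := hnorm x
        have : 0 ≤ 1 / c x ^ 2 := by positivity
        nlinarith [norm_nonneg (k x)]
      · intro x hx
        simp only [hT, Finset.mem_filter, Finset.mem_univ, true_and] at hx
        have hcx : 0 < c x := by linarith
        have h3 : 1 / c x ≤ 1 / h := one_div_le_one_div_of_le hp hx.1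
        have h4 : 1 / c x ≤ 1 := by rw [div_le_one hcx]; exact hc x
        have h5 : 0 < 1 / c x := by positivity
        refine le_trans (by linarith : _ ≤ 1 - 1 / c x) ?_
        apply le_of_sq_le_sq _ (norm_nonneg _)
        rw [hnorm x, show 1 / c x ^ 2 = (1 / c x) ^ 2 by field_simp]
        nlinarith
      · intro x hx y hy hxy
        simp only [hT, Finset.mem_filter, Finset.mem_univ, true_and] at hx hy
        have hcx : 0 < c x := by linarith
        have hcy : 0 < c y := by linarith
        apply le_of_sq_le_sq _ (norm_nonneg _)
        rw [norm_sub_sq_real, hnorm, hnorm, hk]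
        have e1 : 1 / c x ^ 2 ≤ 1 / h ^ 2 :=
          one_div_le_one_div_of_le (by positivity) (by gcongr; exact hx.1)
        have e2 : 1 / c y ^ 2 ≤ 1 / h ^ 2 :=
          one_div_le_one_div_of_le (by positivity) (by gcongr; exact hy.1)
        have e3 : 3 / h ^ 2 ≤ D x y / (c x * c y) := by
          rw [div_le_div_iff₀ (by positivity) (by positivity)]
          have := hD x y hxy
          have e4 : c x * c y ≤ (2 * h) * (2 * h) := by
            gcongr
            · exact hx.2.le
            · exact hy.2.le
          nlinarith [sq_nonneg h]
        have e5 : (2 / h) ^ 2 = 4 * (1 / h ^ 2) := by field_simp; norm_num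
        have e6 : 3 / h ^ 2 = 3 * (1 / h ^ 2) := by ring
        rw [e5]
        rw [e6] at e3
        linarith
    have hfin : h ^ m + h ^ m ≤ (2 ^ (J + 1)) ^ m := by
      rw [pow_succ (2:ℝ) J, ← hh, mul_pow]
      have : (2:ℝ) ≤ 2 ^ m := by
        calc (2:ℝ) = 2 ^ 1 := by norm_num
          _ ≤ 2 ^ m := pow_le_pow_right₀ (by norm_num) hm
      nlinarith [pow_pos hp m]
    have hK : (0:ℝ) ≤ 3 * (m + 1) * 2 ^ m := by positivity
    nlinarith [mul_le_mul_of_nonneg_left hfin hK]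

theorem ce_S_upper (m : ℕ) (hm : 1 ≤ m) {ι : Type*} [Fintype ι] (c : ι → ℝ) (D : ι → ι → ℝ)
    (k : ι → EuclideanSpace ℝ (Fin (m + 1))) (hc : ∀ x, 1 ≤ c x)
    (hk : ∀ x y, inner ℝ (k x) (k y) = 1 - D x y / (c x * c y))
    (hD1 : ∀ x, D x x = 1) (hD : ∀ x y, x ≠ y → 12 ≤ D x y) (a b : ℕ) :
    ∑ x, 1 / c x ≤ (3 * (m + 1) * 2 ^ m) * (2 ^ a) ^ m
      + 1 / 2 ^ a * ((3 * (m + 1) * 2 ^ m) * (2 ^ b) ^ m) + 1 / 2 ^ b * Fintype.card ι := by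
  have hpt : ∀ x, 1 / c x ≤ (if c x < 2 ^ a then (1:ℝ) else 0)
      + 1 / 2 ^ a * (if c x < 2 ^ b then (1:ℝ) else 0) + 1 / 2 ^ b := by
    intro x
    have hcx : 0 < c x := by linarith [hc x]
    have p1 : (0:ℝ) < 1 / 2 ^ a := by positivity
    have p2 : (0:ℝ) < 1 / 2 ^ b := by positivity
    have p3 : 1 / c x ≤ 1 := by rw [div_le_one hcx]; exact hc x
    split_ifs with h1 h2 h2
    · linarith
    · linarith
    · have := one_div_le_one_div_of_le (by positivity) (not_lt.1 h1); linarith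
    · have := one_div_le_one_div_of_le (by positivity) (not_lt.1 h2); linarith
  refine (Finset.sum_le_sum (fun x _ => hpt x)).trans ?_
  rw [Finset.sum_add_distrib, Finset.sum_add_distrib, ← Finset.mul_sum, Finset.sum_boole,
    Finset.sum_boole, Finset.sum_const, Finset.card_univ, nsmul_eq_mul,
    mul_comm (Fintype.card ι : ℝ)]
  have ha := ce_count m hm c D k hc hk hD1 hD a
  have hb := ce_count m hm c D k hc hk hD1 hD b
  gcongr

theorem ce_S_lower (n N : ℕ) (hN : 1 ≤ N) {E : Type*} [NormedAddCommGroup E]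
    [InnerProductSpace ℝ E] (c : (Fin n → Fin N) → ℝ)
    (D : (Fin n → Fin N) → (Fin n → Fin N) → ℝ) (k : (Fin n → Fin N) → E)
    (hc : ∀ x, 1 ≤ c x)
    (hk : ∀ x y, inner ℝ (k x) (k y) = 1 - D x y / (c x * c y))
    (hD1 : ∀ x, D x x = 1) (D0 : ℝ) (hD0 : 1 ≤ D0) (hsum : ∑ x, k x = 0)
    (hedge : ∀ x y : Fin n → Fin N, ∀ i, (∀ j, j ≠ i → x j = y j) → ((y i : ℕ) = x i + 1) →
      D x y ≤ D0) :
    (N : ℝ) ^ n ≤ (2 * n * D0 + 1) * N * ∑ x, 1 / c x := by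
  have hnorm : ∀ x, ‖k x‖ ^ 2 = 1 - 1 / c x ^ 2 := by
    intro x
    rw [← real_inner_self_eq_norm_sq, hk, hD1, sq]
  have hpos : ∀ x, 0 < 1 / c x := fun x => by have := hc x; positivity
  have hP := ce_poincare N n k (fun x => 2 * D0 * (1 / c x))
    (fun x => by have := hpos x; positivity)
    (fun x y i h1 h2 => ce_edge (k x) (k y) (c x) (c y) (D x y) D0 (hc x) (hc y) (hnorm x)
      (hnorm y) (hk x y) (hedge x y i h1 h2) hD0)
  rw [← Finset.mul_sum] at hP
  set S := ∑ x, 1 / c x with hS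
  have hS0 : 0 ≤ S := Finset.sum_nonneg (fun x _ => (hpos x).le)
  have hV : (0:ℝ) < (N:ℝ) ^ n := by positivity
  have hcardV : ((Finset.univ : Finset (Fin n → Fin N)).card : ℝ) = (N:ℝ) ^ n := by simp
  have hlow : (N:ℝ) ^ n * ((N:ℝ) ^ n - S) ≤ ∑ x, ∑ y, ‖k x - k y‖ := by
    have h1 : ∀ x, (N:ℝ) ^ n * (1 - 1 / c x) ≤ ∑ y, ‖k x - k y‖ := by
      intro x
      have h2 : ‖∑ y, (k x - k y)‖ ≤ ∑ y, ‖k x - k y‖ := norm_sum_le _ _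
      rw [Finset.sum_sub_distrib, hsum, sub_zero, Finset.sum_const, ← Nat.cast_smul_eq_nsmul ℝ,
        hcardV, norm_smul, Real.norm_of_nonneg hV.le] at h2
      refine le_trans ?_ h2
      gcongr
      have hcx : 0 < c x := by linarith [hc x]
      have h4 : 1 / c x ≤ 1 := by rw [div_le_one hcx]; exact hc x
      apply le_of_sq_le_sq _ (norm_nonneg _)
      rw [hnorm x, show 1 / c x ^ 2 = (1 / c x) ^ 2 by field_simp]
      nlinarith [hpos x]
    have h3 := Finset.sum_le_sum (fun x (_ : x ∈ Finset.univ) => h1 x)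
    rw [← Finset.mul_sum, Finset.sum_sub_distrib, Finset.sum_const, nsmul_eq_mul, hcardV, mul_one] at h3
    exact h3
  have h5 : (N:ℝ) ^ n * ((N:ℝ) ^ n - S) ≤ (N:ℝ) ^ n * (n * N * (2 * D0 * S)) := by
    refine (hlow.trans hP).trans (le_of_eq ?_)
    ring
  have h6 := le_of_mul_le_mul_left h5 hV
  have hN1 : (1:ℝ) ≤ N := by exact_mod_cast hN
  nlinarith [mul_le_mul_of_nonneg_right hN1 hS0]

theorem ce_numeric (m : ℕ) (hm : 1 ≤ m) (C K : ℝ) (hC : 1 ≤ C) (hK : 1 ≤ K)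
    (h : ∀ q a b : ℕ, ((2:ℝ) ^ q) ^ (m + 1) ≤ C * 2 ^ q * (K * (2 ^ a) ^ m
      + 1 / 2 ^ a * (K * (2 ^ b) ^ m) + 1 / 2 ^ b * (2 ^ q) ^ (m + 1))) : False := by
  obtain ⟨p, hp⟩ := pow_unbounded_of_one_lt (4 * C) (one_lt_two : (1:ℝ) < 2)
  obtain ⟨a, ha⟩ := pow_unbounded_of_one_lt (4 * C * K * (2 ^ p) ^ m) (one_lt_two : (1:ℝ) < 2)
  obtain ⟨q, hq⟩ := pow_unbounded_of_one_lt (2 * C * K * (2 ^ a) ^ m) (one_lt_two : (1:ℝ) < 2)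
  have h0 := h q a (q + p)
  set Q : ℝ := 2 ^ q with hQ
  set A : ℝ := 2 ^ a with hA
  set R : ℝ := 2 ^ p with hR
  have hQ1 : 1 ≤ Q := one_le_pow₀ (by norm_num)
  have hA0 : 0 < A := by positivity
  have hR0 : 0 < R := by positivity
  have hQ0 : 0 < Q := by positivity
  rw [pow_add 2 q p, ← hQ, ← hR] at h0
  set X : ℝ := Q ^ m with hX
  have hX0 : 0 < X := by positivity
  have hQX : Q ≤ X := by
    calc Q = Q ^ 1 := (pow_one _).symm
      _ ≤ Q ^ m := pow_le_pow_right₀ hQ1 hm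
  have h1 : X ≤ C * (K * A ^ m + 1 / A * (K * (X * R ^ m)) + 1 / R * X) := by
    have : Q * X ≤ Q * (C * (K * A ^ m + 1 / A * (K * (X * R ^ m)) + 1 / R * X)) := by
      calc Q * X = Q ^ (m + 1) := by rw [pow_succ, hX]; ring
        _ ≤ _ := h0
        _ = _ := by rw [pow_succ, mul_pow, ← hX]; field_simp
    exact le_of_mul_le_mul_left this hQ0
  have h2 : C * (1 / A * (K * (X * R ^ m))) ≤ X / 4 := by
    rw [show C * (1 / A * (K * (X * R ^ m))) = (4 * C * K * R ^ m) * X / (4 * A) by field_simp]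
    rw [div_le_div_iff₀ (by positivity) (by norm_num)]
    nlinarith
  have h3 : C * (1 / R * X) ≤ X / 4 := by
    rw [show C * (1 / R * X) = (4 * C) * X / (4 * R) by field_simp]
    rw [div_le_div_iff₀ (by positivity) (by norm_num)]
    nlinarith
  nlinarith

theorem ce_minkB (n : ℕ) (x y : Fin (n + 1) → ℝ) :
    -(minkB n x y) = x 0 * y 0 - inner ℝ (WithLp.toLp 2 (fun i : Fin n => x i.succ))
      (WithLp.toLp 2 (fun i : Fin n => y i.succ)) := by
  simp [minkB, Fin.sum_univ_succ, PiLp.inner_apply, mul_comm]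
  ring

theorem ce_D_ge_one {E : Type*} [NormedAddCommGroup E] [InnerProductSpace ℝ E]
    (v w : E) (a b : ℝ) (ha : 0 < a) (hb : 0 < b) (hv : a ^ 2 = 1 + ‖v‖ ^ 2)
    (hw : b ^ 2 = 1 + ‖w‖ ^ 2) : 1 ≤ a * b - inner ℝ v w := by
  have h1 := real_inner_le_norm v w
  have h2 : 1 + ‖v‖ * ‖w‖ ≤ a * b := by
    apply le_of_sq_le_sq _ (by positivity)
    rw [mul_pow, hv, hw]
    nlinarith [sq_nonneg (‖v‖ - ‖w‖)]
  linarith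

/-- For `n ≥ 2`, there is no coarse embedding from Euclidean `ℝⁿ` into the real
hyperbolic space `ℍⁿ` (hyperboloid model, with distance `d_H(x,y) = arcosh(−B(x,y))`). -/
theorem no_coarseEmbedding_euclidean_into_hyperbolic (n : ℕ) (hn : 2 ≤ n) :
    ¬ ∃ α : EuclideanSpace ℝ (Fin n) → {x : Fin (n + 1) → ℝ // x ∈ HypSet n},
      IsCoarseEmbeddingWrt (fun x y => dist x y)
        (fun x y => dHyp n x.1 y.1) α := by
  rintro ⟨α, φm, φp, -, -, hφm, -, hα⟩
  obtain ⟨m, rfl⟩ : ∃ m, n = m + 1 := ⟨n - 1, by omega⟩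
  have hm : 1 ≤ m := by omega
  obtain ⟨L0, hL0⟩ := eventually_atTop.1 (hφm.eventually_ge_atTop (Real.arcosh 12))
  set L : ℝ := max L0 1 with hL
  have hL1 : 1 ≤ L := le_max_right _ _
  let A : EuclideanSpace ℝ (Fin (m + 1)) → ℝ := fun z => (α z).1 0
  let V : EuclideanSpace ℝ (Fin (m + 1)) → EuclideanSpace ℝ (Fin (m + 1)) :=
    fun z => WithLp.toLp 2 (fun i : Fin (m + 1) => (α z).1 i.succ)
  have hB : ∀ z w, -(minkB (m + 1) (α z).1 (α w).1) = A z * A w - inner ℝ (V z) (V w) :=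
    fun z w => ce_minkB (m + 1) _ _
  have hA0 : ∀ z, 0 < A z := fun z => (α z).2.2
  have hAV : ∀ z, A z ^ 2 = 1 + ‖V z‖ ^ 2 := by
    intro z
    have h1 := hB z z
    rw [(α z).2.1, real_inner_self_eq_norm_sq] at h1
    linarith
  have hge : ∀ z w, 1 ≤ A z * A w - inner ℝ (V z) (V w) :=
    fun z w => ce_D_ge_one _ _ _ _ (hA0 z) (hA0 w) (hAV z) (hAV w)
  have hd : ∀ z w, dHyp (m + 1) (α z).1 (α w).1
      = Real.arcosh (A z * A w - inner ℝ (V z) (V w)) := by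
    intro z w
    rw [dHyp, hB]; rfl
  have hlow : ∀ z w, L ≤ dist z w → 12 ≤ A z * A w - inner ℝ (V z) (V w) := by
    intro z w hzw
    have h1 := (hα z w).1
    simp only [hd] at h1
    have h2 := hL0 (dist z w) ((le_max_left _ _).trans hzw)
    exact (Real.arcosh_le_arcosh (by norm_num) (by linarith [hge z w])).1 (h2.trans h1)
  set D0 := Real.cosh (φp L) with hD0
  have hup : ∀ z w, dist z w = L → A z * A w - inner ℝ (V z) (V w) ≤ D0 := by
    intro z w hzw
    have h1 := (hα z w).2
    simp only [hd, hzw] at h1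
    have h3 := Real.arcosh_nonneg (hge z w)
    rw [← Real.cosh_arcosh (hge z w), hD0, Real.cosh_le_cosh, abs_of_nonneg h3]
    exact h1.trans (le_abs_self _)
  have hD01 : 1 ≤ D0 := Real.one_le_cosh _
  refine ce_numeric m hm (2 * ((m + 1 : ℕ) : ℝ) * D0 + 1) (3 * (m + 1) * 2 ^ m) ?_ ?_ ?_
  · have : (0:ℝ) ≤ 2 * ((m + 1 : ℕ) : ℝ) * D0 := by positivity
    linarith
  · have : (1:ℝ) ≤ 2 ^ m := one_le_pow₀ (by norm_num)
    have h2 : (0:ℝ) ≤ m := by positivity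
    nlinarith
  intro q a b
  let N : ℕ := 2 ^ q
  have hN : 1 ≤ N := Nat.one_le_two_pow
  haveI : Nonempty (Fin N) := ⟨⟨0, hN⟩⟩
  let Z : (Fin (m + 1) → Fin N) → EuclideanSpace ℝ (Fin (m + 1)) :=
    fun x => WithLp.toLp 2 (fun i => L * ((x i : ℕ) : ℝ))
  have hZfar : ∀ x y, x ≠ y → L ≤ dist (Z x) (Z y) := by
    intro x y hxy
    obtain ⟨i, hi⟩ := Function.ne_iff.1 hxy
    have h1 : ‖(Z x - Z y) i‖ ≤ ‖Z x - Z y‖ := PiLp.norm_apply_le _ _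
    rw [dist_eq_norm]
    refine le_trans ?_ h1
    have h2 : (Z x - Z y) i = L * (((x i : ℕ) : ℤ) - ((y i : ℕ) : ℤ) : ℤ) := by
      simp [Z]; ring
    rw [h2, norm_mul, Real.norm_of_nonneg (by linarith)]
    have h3 : (1:ℝ) ≤ ‖((((x i : ℕ) : ℤ) - ((y i : ℕ) : ℤ) : ℤ) : ℝ)‖ := by
      rw [Real.norm_eq_abs]
      have : ((x i : ℕ) : ℤ) - ((y i : ℕ) : ℤ) ≠ 0 := by
        intro h; apply hi; apply Fin.ext; omega
      exact_mod_cast Int.one_le_abs this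
    nlinarith
  have hZnear : ∀ x y : Fin (m + 1) → Fin N, ∀ i, (∀ j, j ≠ i → x j = y j) →
      ((y i : ℕ) = x i + 1) → dist (Z x) (Z y) = L := by
    intro x y i hj hi
    rw [EuclideanSpace.dist_eq, Finset.sum_eq_single i]
    · simp only [Z, hi, Real.dist_eq]
      rw [sq_abs]
      push_cast
      rw [show (L * ((x i : ℕ) : ℝ) - L * (((x i : ℕ) : ℝ) + 1)) ^ 2 = L ^ 2 by ring]
      exact Real.sqrt_sq (by linarith)
    · intro j _ hji
      simp [Z, hj j hji]
    · simp
  obtain ⟨c, k, hc, hk, hsum⟩ := ce_center (fun x => A (Z x)) (fun x => V (Z x))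
    (fun x => hA0 _) (fun x => hAV _)
  let D : (Fin (m + 1) → Fin N) → (Fin (m + 1) → Fin N) → ℝ :=
    fun x y => A (Z x) * A (Z y) - inner ℝ (V (Z x)) (V (Z y))
  have hDD : ∀ x, D x x = 1 := by
    intro x
    simp only [D]
    rw [real_inner_self_eq_norm_sq]
    linarith [hAV (Z x)]
  have hu := ce_S_upper m hm c D k hc hk hDD (fun x y hxy => hlow _ _ (hZfar x y hxy)) a b
  have hl := ce_S_lower (m + 1) N hN c D k hc hk hDD D0 hD01 hsum
    (fun x y i h1 h2 => hup _ _ (hZnear x y i h1 h2))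
  have hNc : (N : ℝ) = 2 ^ q := by simp [N]
  have hcard : (Fintype.card (Fin (m + 1) → Fin N) : ℝ) = (2 ^ q) ^ (m + 1) := by
    simp [hNc]
  rw [hNc] at hl
  rw [hcard] at hu
  refine hl.trans ?_
  gcongr
end
end

section
/- Let (X, d_X) and (Y, d_Y) be metric spaces such that: X is quasi-geodesic; X and Y are uniformly discrete; and X and Y have bounded geometry (for every r > 0 there is N_r ∈ ℕ such that every closed ball of radius r contains at most N_r points). Let α : X → Y be a coarse embedding. Then there exist a constant k ∈ ℕ and constants a > 0, b ≥ 0 such that for every x₀ ∈ X and every r ≥ 0, the number of points of the closed ball B_X(x₀, r) is at most k times the number of points of the closed ball B_Y(α(x₀), a·r + b). -/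
open Filter Metric Set Bornology

noncomputable section

/-- A coarse embedding between metric spaces: there are nondecreasing control functions
`φ⁻, φ⁺ : [0,∞) → ℝ` tending to `+∞` with
`φ⁻(d(x,y)) ≤ d(α x, α y) ≤ φ⁺(d(x,y))` for all `x, y`. -/
def IsCoarseEmbedding {X Y : Type*} [MetricSpace X] [MetricSpace Y] (α : X → Y) : Prop :=
  ∃ φm φp : ℝ → ℝ,
    MonotoneOn φm (Set.Ici 0) ∧ MonotoneOn φp (Set.Ici 0) ∧
    Tendsto φm atTop atTop ∧ Tendsto φp atTop atTop ∧
    ∀ x y : X, φm (dist x y) ≤ dist (α x) (α y) ∧ dist (α x) (α y) ≤ φp (dist x y)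

/-- A metric space is quasi-geodesic if there are `a, b > 0` such that any two points are joined
by an `(a,b)`-quasi-geodesic. -/
def QuasiGeodesicSpace (X : Type*) [MetricSpace X] : Prop :=
  ∃ a : ℝ, 0 < a ∧ ∃ b : ℝ, 0 < b ∧ ∀ x y : X, ∃ L : ℝ, 0 ≤ L ∧ ∃ γ : ℝ → X,
    γ 0 = x ∧ γ L = y ∧ ∀ t ∈ Set.Icc (0:ℝ) L, ∀ t' ∈ Set.Icc (0:ℝ) L,
      (1 / a) * |t - t'| - b ≤ dist (γ t) (γ t') ∧ dist (γ t) (γ t') ≤ a * |t - t'| + b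

/-- A metric space is uniformly discrete if distinct points are at distance at least `C > 0`. -/
def UniformlyDiscrete (X : Type*) [MetricSpace X] : Prop :=
  ∃ C : ℝ, 0 < C ∧ ∀ x y : X, x ≠ y → C ≤ dist x y

/-- A metric space has bounded geometry if for every `r > 0` there is `N` such that every closed
ball of radius `r` has at most `N` points. -/
def BoundedGeometry (X : Type*) [MetricSpace X] : Prop :=
  ∀ r : ℝ, 0 < r → ∃ N : ℕ, ∀ x : X,
    (Metric.closedBall x r).Finite ∧ (Metric.closedBall x r).ncard ≤ N

/-- If `X` is quasi-geodesic, `X` and `Y` are uniformly discrete with bounded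
geometry, and `α : X → Y` is a coarse embedding, then there are `k ∈ ℕ`, `a > 0`, `b ≥ 0` such
that for every `x₀` and `r ≥ 0`, the cardinality of `B_X(x₀, r)` is at most `k` times the
cardinality of `B_Y(α x₀, a r + b)`. -/
theorem card_ball_le_of_coarseEmbedding
    {X Y : Type*} [MetricSpace X] [MetricSpace Y]
    (hqg : QuasiGeodesicSpace X)
    (hudX : UniformlyDiscrete X) (hudY : UniformlyDiscrete Y)
    (hbgX : BoundedGeometry X) (hbgY : BoundedGeometry Y)
    (α : X → Y) (hα : IsCoarseEmbedding α) :
    ∃ (k : ℕ) (a b : ℝ), 0 < a ∧ 0 ≤ b ∧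
      ∀ (x₀ : X) (r : ℝ), 0 ≤ r →
        (Metric.closedBall x₀ r).ncard ≤ k * (Metric.closedBall (α x₀) (a * r + b)).ncard := by
  classical
  obtain ⟨a, ha, b, hb, hq⟩ := hqg
  obtain ⟨φm, φp, hm, hp, tm, tp, hφ⟩ := hα
  obtain ⟨M, hM0, hM⟩ : ∃ M : ℝ, 0 < M ∧ φp (a + b) ≤ M :=
    ⟨max (φp (a + b)) 1, lt_of_lt_of_le one_pos (le_max_right _ _), le_max_left _ _⟩
  have key : ∀ x y : X, dist (α x) (α y) ≤ (a * M) * dist x y + (a * b + 1) * M := by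
    intro x y
    obtain ⟨L, hL, γ, h0, h1, hγ⟩ := hq x y
    have hmem : ∀ i : ℕ, min (i : ℝ) L ∈ Set.Icc (0 : ℝ) L := fun i =>
      ⟨le_min (Nat.cast_nonneg i) hL, min_le_right _ _⟩
    have step : ∀ i : ℕ, dist (α x) (α (γ (min (i : ℝ) L))) ≤ i * M := by
      intro i
      induction i with
      | zero => simp [min_eq_left hL, h0]
      | succ i ih =>
        have h2 := (hγ _ (hmem i) _ (hmem (i + 1))).2
        have h3 : |min (i : ℝ) L - min ((i + 1 : ℕ) : ℝ) L| ≤ 1 := by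
          refine (abs_min_sub_min_le_max _ _ _ _).trans ?_
          simp
        have h4 : dist (γ (min (i : ℝ) L)) (γ (min ((i + 1 : ℕ) : ℝ) L)) ≤ a + b := by
          nlinarith
        have h5 := (hφ (γ (min (i : ℝ) L)) (γ (min ((i + 1 : ℕ) : ℝ) L))).2
        have h6 := hp (Set.mem_Ici.2 dist_nonneg) (Set.mem_Ici.2 (by positivity)) h4
        have h7 := dist_triangle (α x) (α (γ (min (i : ℝ) L))) (α (γ (min ((i + 1 : ℕ) : ℝ) L)))
        have h8 : ((i + 1 : ℕ) : ℝ) * M = i * M + M := by push_cast; ring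
        linarith
    have hs := step ⌈L⌉₊
    rw [min_eq_right (Nat.le_ceil L), h1] at hs
    have hc := (Nat.ceil_lt_add_one hL).le
    have hl := (hγ 0 ⟨le_rfl, hL⟩ L ⟨hL, le_rfl⟩).1
    rw [h0, h1, zero_sub, abs_neg, abs_of_nonneg hL] at hl
    have hl2 : L ≤ a * (dist x y + b) := by
      have : a * (1 / a * L) ≤ a * (dist x y + b) :=
        mul_le_mul_of_nonneg_left (by linarith) ha.le
      have e : a * (1 / a * L) = L := by field_simp
      linarith
    have : (⌈L⌉₊ : ℝ) * M ≤ (a * (dist x y + b) + 1) * M :=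
      mul_le_mul_of_nonneg_right (by linarith) hM0.le
    nlinarith
  obtain ⟨R, hR⟩ := (tm.eventually_ge_atTop 1).exists_forall_of_atTop
  obtain ⟨N, hN⟩ := hbgX (max R 1) (lt_of_lt_of_le one_pos (le_max_right _ _))
  refine ⟨N, a * M, (a * b + 1) * M, by positivity, by positivity, fun x₀ r hr => ?_⟩
  have finX : (closedBall x₀ r).Finite := by
    obtain ⟨K, hK⟩ := hbgX (r + 1) (by linarith)
    exact (hK x₀).1.subset (closedBall_subset_closedBall (by linarith))
  have finY : (closedBall (α x₀) (a * M * r + (a * b + 1) * M)).Finite := by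
    obtain ⟨K, hK⟩ := hbgY (a * M * r + (a * b + 1) * M) (by positivity)
    exact (hK (α x₀)).1
  have fib : ∀ x y, α x = α y → y ∈ closedBall x (max R 1) := by
    intro x y h
    rw [mem_closedBall']
    by_contra hlt
    have h1 := hR (dist x y) ((le_max_left _ _).trans (not_le.1 hlt).le)
    have h2 := (hφ x y).1
    rw [h, dist_self] at h2
    linarith
  rw [ncard_eq_toFinset_card _ finX, ncard_eq_toFinset_card _ finY]
  refine (Finset.card_le_mul_card_image (f := α) finX.toFinset N ?_).trans
    (Nat.mul_le_mul_left _ (Finset.card_le_card ?_))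
  · intro y hy
    obtain ⟨x, hx, rfl⟩ := Finset.mem_image.1 hy
    refine le_trans ?_ (hN x).2
    rw [ncard_eq_toFinset_card _ (hN x).1]
    refine Finset.card_le_card fun z hz => ?_
    rw [Set.Finite.mem_toFinset]
    exact fib x z (Finset.mem_filter.1 hz).2.symm
  · intro y hy
    obtain ⟨x, hx, rfl⟩ := Finset.mem_image.1 hy
    rw [Set.Finite.mem_toFinset, mem_closedBall] at *
    rw [dist_comm] at hx ⊢
    refine (key x₀ x).trans ?_
    have := mul_le_mul_of_nonneg_left hx (by positivity : 0 ≤ a * M)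
    linarith
end
end

section
/- Let (X, d_X) and (Y, d_Y) be metric spaces such that X is quasi-geodesic, and X and Y are uniformly discrete and of bounded geometry, and let α : X → Y be a coarse embedding. If X has exponential growth, i.e. there exist x₀ ∈ X, c > 0 and r₀ ≥ 0 such that the closed ball B_X(x₀, r) has at least e^{c·r} points for every r ≥ r₀, then Y has exponential growth: there exist y₀ ∈ Y, c' > 0 and r₁ ≥ 0 such that the closed ball B_Y(y₀, r) has at least e^{c'·r} points for every r ≥ r₁. -/
open Filter Metric Set Bornology

noncomputable section

/-- Under the standing assumptions (X quasi-geodesic, X and Y uniformly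
discrete of bounded geometry, `α` a coarse embedding), if `X` has exponential growth then so
does `Y`. -/
theorem exponential_growth_of_coarseEmbedding
    {X Y : Type*} [MetricSpace X] [MetricSpace Y]
    (hqg : QuasiGeodesicSpace X)
    (hudX : UniformlyDiscrete X) (hudY : UniformlyDiscrete Y)
    (hbgX : BoundedGeometry X) (hbgY : BoundedGeometry Y)
    (α : X → Y) (hα : IsCoarseEmbedding α)
    (hX : ∃ (x₀ : X) (c r₀ : ℝ), 0 < c ∧ 0 ≤ r₀ ∧
      ∀ r : ℝ, r₀ ≤ r → Real.exp (c * r) ≤ ((Metric.closedBall x₀ r).ncard : ℝ)) :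
    ∃ (y₀ : Y) (c' r₁ : ℝ), 0 < c' ∧ 0 ≤ r₁ ∧
      ∀ r : ℝ, r₁ ≤ r → Real.exp (c' * r) ≤ ((Metric.closedBall y₀ r).ncard : ℝ) := by
  classical
  obtain ⟨a, ha, b, hb, hqg⟩ := hqg
  obtain ⟨φm, φp, hm, hp, tm, tp, hφ⟩ := hα
  obtain ⟨x₀, c, r₀, hc, hr₀, hX⟩ := hX
  -- upper Lipschitz-type control
  obtain ⟨M, hMdef⟩ : ∃ M : ℝ, M = max (φp (a + b)) 1 := ⟨_, rfl⟩
  have hM1 : 1 ≤ M := hMdef ▸ le_max_right _ _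
  have hMφ : φp (a + b) ≤ M := hMdef ▸ le_max_left _ _
  have hup : ∀ x : X, dist (α x) (α x₀) ≤ (a * M) * dist x x₀ + (a * b + 1) * M := by
    intro x
    obtain ⟨L, hL, γ, h0, h1, hγ⟩ := hqg x₀ x
    have hmem : ∀ k : ℕ, min (k : ℝ) L ∈ Set.Icc (0 : ℝ) L := fun k =>
      ⟨le_min (Nat.cast_nonneg k) hL, min_le_right _ _⟩
    have step : ∀ k : ℕ, dist (α (γ (min (k : ℝ) L))) (α x₀) ≤ k * M := by
      intro k
      induction k with
      | zero => simp [min_eq_left hL, h0]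
      | succ k ih =>
        have e1 := (hγ _ (hmem (k + 1)) _ (hmem k)).2
        have e2 : |min ((k + 1 : ℕ) : ℝ) L - min (k : ℝ) L| ≤ 1 := by
          push_cast
          rw [abs_le]
          rcases le_total (k + 1 : ℝ) L with h | h <;> rcases le_total (k : ℝ) L with h' | h' <;>
            simp only [min_eq_left, min_eq_right, h, h'] <;> constructor <;> linarith
        have e3 : dist (γ (min ((k + 1 : ℕ) : ℝ) L)) (γ (min (k : ℝ) L)) ≤ a + b := by
          nlinarith
        have e4 := (hφ (γ (min ((k + 1 : ℕ) : ℝ) L)) (γ (min (k : ℝ) L))).2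
        have e5 := hp (Set.mem_Ici.2 dist_nonneg) (Set.mem_Ici.2 (by linarith)) e3
        have e6 := dist_triangle (α (γ (min ((k + 1 : ℕ) : ℝ) L))) (α (γ (min (k : ℝ) L))) (α x₀)
        push_cast at *
        linarith
    have h2 := step ⌈L⌉₊
    rw [min_eq_right (Nat.le_ceil L), h1] at h2
    have h3 : (⌈L⌉₊ : ℝ) < L + 1 := Nat.ceil_lt_add_one hL
    have h4 := (hγ 0 ⟨le_refl _, hL⟩ L ⟨hL, le_refl _⟩).1
    rw [h0, h1, zero_sub, abs_neg, abs_of_nonneg hL, dist_comm] at h4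
    have h5 : L ≤ a * (dist x x₀ + b) := by
      have h6 : 1 / a * L ≤ dist x x₀ + b := by linarith
      calc L = a * (1 / a * L) := by field_simp
        _ ≤ _ := mul_le_mul_of_nonneg_left h6 ha.le
    nlinarith
  -- fibres
  obtain ⟨R, hR⟩ := (tm.eventually_gt_atTop 0).exists_forall_of_atTop
  obtain ⟨N, hN⟩ := hbgX (max R 1) (by positivity)
  have hfinY : ∀ (z : Y) (r : ℝ), (Metric.closedBall z r).Finite := by
    intro z r
    obtain ⟨_, h⟩ := hbgY (max r 1) (by positivity)
    exact (h z).1.subset (Metric.closedBall_subset_closedBall (le_max_left _ _))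
  have hfinX : ∀ (z : X) (r : ℝ), (Metric.closedBall z r).Finite := by
    intro z r
    obtain ⟨_, h⟩ := hbgX (max r 1) (by positivity)
    exact (h z).1.subset (Metric.closedBall_subset_closedBall (le_max_left _ _))
  obtain ⟨A, hA⟩ : ∃ A : ℝ, A = a * M := ⟨_, rfl⟩
  obtain ⟨B, hB⟩ : ∃ B : ℝ, B = (a * b + 1) * M := ⟨_, rfl⟩
  rw [← hA, ← hB] at hup
  have hA0 : 0 < A := by rw [hA]; positivity
  have count : ∀ r : ℝ, (Metric.closedBall x₀ r).ncard ≤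
      (N + 1) * (Metric.closedBall (α x₀) (A * r + B)).ncard := by
    intro r
    rw [Set.ncard_eq_toFinset_card _ (hfinX x₀ r), Set.ncard_eq_toFinset_card _ (hfinY _ _)]
    apply Finset.card_le_mul_card_image_of_maps_to (f := α)
    · intro x hx
      simp only [Set.Finite.mem_toFinset, Finset.mem_coe, Metric.mem_closedBall] at hx ⊢
      have := hup x
      nlinarith
    · intro y _
      rcases Finset.eq_empty_or_nonempty
        ((hfinX x₀ r).toFinset.filter (fun x => α x = y)) with h | ⟨z, hz⟩
      · rw [h]; simp
      · have hsub : (hfinX x₀ r).toFinset.filter (fun x => α x = y) ⊆ (hN z).1.toFinset := by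
          intro w hw
          rw [Finset.mem_filter] at hw hz
          rw [Set.Finite.mem_toFinset, Metric.mem_closedBall]
          by_contra hcon
          have h1 : R ≤ dist w z := by
            have := le_max_left R 1
            linarith
          have h2 := hR _ h1
          have h3 := (hφ w z).1
          rw [hw.2, hz.2, dist_self] at h3
          linarith
        have h1 := Finset.card_le_card hsub
        have h2 := (hN z).2
        rw [Set.ncard_eq_toFinset_card _ (hN z).1] at h2
        omega
  obtain ⟨l, hl⟩ : ∃ l : ℝ, l = Real.log (N + 1) := ⟨_, rfl⟩
  have hexp : Real.exp l = N + 1 := by rw [hl]; exact Real.exp_log (by positivity)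
  refine ⟨α x₀, c / (2 * A), max 0 (max (A * r₀ + B) (2 * B + 2 * A * l / c)), by positivity,
    le_max_left _ _, ?_⟩
  intro s hs
  simp only [max_le_iff] at hs
  obtain ⟨hs0, hs1, hs2⟩ := hs
  have k1 : r₀ ≤ (s - B) / A := by
    rw [le_div_iff₀ hA0]; linarith
  have k2 := hX _ k1
  have k3 := count ((s - B) / A)
  rw [show A * ((s - B) / A) + B = s by field_simp; ring] at k3
  have k4 : ((Metric.closedBall x₀ ((s - B) / A)).ncard : ℝ) ≤
      (N + 1) * (Metric.closedBall (α x₀) s).ncard := by exact_mod_cast k3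
  have k5 : c / (2 * A) * s + l ≤ c * ((s - B) / A) := by
    have e : c * ((s - B) / A) - (c / (2 * A) * s + l)
        = c / (2 * A) * (s - (2 * B + 2 * A * l / c)) := by field_simp; ring
    have : 0 ≤ c / (2 * A) * (s - (2 * B + 2 * A * l / c)) :=
      mul_nonneg (by positivity) (by linarith)
    linarith
  have k6 := Real.exp_le_exp.2 k5
  rw [Real.exp_add, hexp] at k6
  have hN0 : (0 : ℝ) < N + 1 := by positivity
  refine le_of_mul_le_mul_left ?_ hN0
  linarith
end
end

section
/- Let (X, d_X) and (Y, d_Y) be metric spaces such that X is quasi-geodesic, and X and Y are uniformly discrete and of bounded geometry, and let α : X → Y be a coarse embedding. Let d ∈ ℕ. If Y has polynomial growth of degree at most d, i.e. there exist y₀ ∈ Y, C > 0 and r₀ ≥ 0 such that the closed ball B_Y(y₀, r) has at most C·r^d points for every r ≥ r₀, then X has polynomial growth of degree at most d: for every x₀ ∈ X there exist C' > 0 and r₁ ≥ 0 such that the closed ball B_X(x₀, r) has at most C'·r^d points for every r ≥ r₁. -/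
open Filter Metric Set Bornology

noncomputable section

/-- Under the standing assumptions (X quasi-geodesic, X and Y uniformly
discrete of bounded geometry, `α` a coarse embedding), if `Y` has polynomial growth of degree at
most `d` then so does `X`. -/
theorem polynomial_growth_of_coarseEmbedding
    {X Y : Type*} [MetricSpace X] [MetricSpace Y]
    (hqg : QuasiGeodesicSpace X)
    (hudX : UniformlyDiscrete X) (hudY : UniformlyDiscrete Y)
    (hbgX : BoundedGeometry X) (hbgY : BoundedGeometry Y)
    (α : X → Y) (hα : IsCoarseEmbedding α)
    (d : ℕ)
    (hY : ∃ (y₀ : Y) (C r₀ : ℝ), 0 < C ∧ 0 ≤ r₀ ∧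
      ∀ r : ℝ, r₀ ≤ r → ((Metric.closedBall y₀ r).ncard : ℝ) ≤ C * r ^ d) :
    ∀ x₀ : X, ∃ (C' r₁ : ℝ), 0 < C' ∧ 0 ≤ r₁ ∧
      ∀ r : ℝ, r₁ ≤ r → ((Metric.closedBall x₀ r).ncard : ℝ) ≤ C' * r ^ d := by
  obtain ⟨a, ha, b, hb, hγ⟩ := hqg
  obtain ⟨φm, φp, -, hφp, hm, -, hφ⟩ := hα
  obtain ⟨y₀, C, r₀, hC, hr₀, hgrow⟩ := hY
  intro x₀
  -- upper control: `α` is large-scale Lipschitz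
  obtain ⟨M, hM0, hM⟩ : ∃ M : ℝ, 0 ≤ M ∧ ∀ x y : X, dist x y ≤ a + b →
      dist (α x) (α y) ≤ M := by
    refine ⟨max (φp (a + b)) 0, le_max_right _ _, fun x y h => ?_⟩
    refine (hφ x y).2.trans (le_trans ?_ (le_max_left _ _))
    exact hφp (Set.mem_Ici.2 dist_nonneg) (Set.mem_Ici.2 (by positivity)) h
  have hlip : ∀ x y : X, dist (α x) (α y) ≤ (a * (dist x y + b) + 1) * M := by
    intro x y
    obtain ⟨L, hL, γ, h0, h1, hq⟩ := hγ x y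
    have key : ∀ n : ℕ, ∀ t ∈ Set.Icc (0:ℝ) L, t ≤ n → dist (α (γ 0)) (α (γ t)) ≤ n * M := by
      intro n
      induction n with
      | zero =>
        intro t ht htn
        have : t = 0 := le_antisymm (by simpa using htn) ht.1
        simp [this]
      | succ k ih =>
        intro t ht htn
        push_cast at htn ⊢
        have hmem : max (t - 1) 0 ∈ Set.Icc (0:ℝ) L :=
          ⟨le_max_right _ _, max_le (by linarith [ht.2]) hL⟩
        have h2 := ih _ hmem (max_le (by linarith) (Nat.cast_nonneg k))
        have h3 := (hq _ hmem t ht).2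
        have h4 : |max (t - 1) 0 - t| ≤ 1 := by
          rw [abs_le]
          constructor
          · linarith [le_max_left (t - 1) 0]
          · have := max_le (show t - 1 ≤ t + 1 by linarith) (show 0 ≤ t + 1 by linarith [ht.1])
            linarith
        have h5 := hM (γ (max (t - 1) 0)) (γ t) (by nlinarith)
        have h6 := dist_triangle (α (γ 0)) (α (γ (max (t - 1) 0))) (α (γ t))
        linarith
    have h2 := key ⌈L⌉₊ L ⟨hL, le_rfl⟩ (Nat.le_ceil L)
    have h3 := (hq 0 ⟨le_rfl, hL⟩ L ⟨hL, le_rfl⟩).1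
    rw [h0, h1] at h2 h3
    have h4 : L ≤ a * (dist x y + b) := by
      rw [zero_sub, abs_neg, abs_of_nonneg hL] at h3
      have : (1 / a) * L ≤ dist x y + b := by linarith
      calc L = a * ((1 / a) * L) := by field_simp
        _ ≤ _ := by gcongr
    have h5 := Nat.ceil_lt_add_one hL
    refine h2.trans (mul_le_mul_of_nonneg_right (by linarith) hM0)
  -- fibres are bounded
  obtain ⟨R, hR⟩ := Filter.eventually_atTop.1 (hm.eventually_gt_atTop 0)
  have hfib : ∀ x y : X, α x = α y → dist x y ≤ max R 1 := by
    intro x y h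
    by_contra hlt
    have h1 := hR (dist x y) ((le_max_left R 1).trans (not_le.1 hlt).le)
    have h2 := (hφ x y).1
    rw [h, dist_self] at h2
    linarith
  obtain ⟨N, hN⟩ := hbgX (max R 1) (lt_of_lt_of_le one_pos (le_max_right _ _))
  set A : ℝ := a * M + (a * b + 1) * M + dist (α x₀) y₀ + r₀ with hA
  have hA0 : 0 ≤ A := by positivity
  refine ⟨N * (C * A ^ d) + 1, 1, by positivity, zero_le_one, fun r hr => ?_⟩
  classical
  obtain ⟨NX, hNX⟩ := hbgX r (by linarith)
  have hfin := (hNX x₀).1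
  have hAr : r₀ ≤ A * r := by
    have : r₀ ≤ A := by
      have : 0 ≤ a * M + (a * b + 1) * M + dist (α x₀) y₀ := by positivity
      linarith
    nlinarith
  have himg : α '' closedBall x₀ r ⊆ closedBall y₀ (A * r) := by
    rintro _ ⟨x, hx, rfl⟩
    rw [mem_closedBall] at hx ⊢
    have h1 := hlip x x₀
    have h2 := dist_triangle (α x) (α x₀) y₀
    have h3 : (a * (dist x x₀ + b) + 1) * M ≤ (a * (r + b) + 1) * M := by gcongr
    have h4 : 0 ≤ ((a * b + 1) * M + dist (α x₀) y₀ + r₀) * (r - 1) :=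
      mul_nonneg (by positivity) (by linarith)
    rw [hA]
    nlinarith
  have hYfin : (closedBall y₀ (A * r)).Finite := by
    obtain ⟨N', hN'⟩ := hbgY (A * r + 1) (by positivity)
    exact (hN' y₀).1.subset (closedBall_subset_closedBall (by linarith))
  have hcard : (closedBall x₀ r).ncard ≤ N * (closedBall y₀ (A * r)).ncard := by
    have h1 : hfin.toFinset.card ≤ N * (hfin.toFinset.image α).card := by
      refine Finset.card_le_mul_card_image _ _ fun y hy => ?_
      obtain ⟨x, hx, rfl⟩ := Finset.mem_image.1 hy
      refine le_trans ?_ (hN x).2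
      rw [Set.ncard_eq_toFinset_card _ (hN x).1]
      refine Finset.card_le_card fun z hz => ?_
      rw [Set.Finite.mem_toFinset, mem_closedBall]
      exact hfib _ _ (Finset.mem_filter.1 hz).2
    have h2 : (hfin.toFinset.image α).card ≤ (closedBall y₀ (A * r)).ncard := by
      rw [Set.ncard_eq_toFinset_card _ hYfin]
      refine Finset.card_le_card fun z hz => ?_
      obtain ⟨x, hx, rfl⟩ := Finset.mem_image.1 hz
      exact hYfin.mem_toFinset.2 (himg ⟨x, hfin.mem_toFinset.1 hx, rfl⟩)
    rw [Set.ncard_eq_toFinset_card _ hfin]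
    exact h1.trans (Nat.mul_le_mul_left _ h2)
  have hrd : 0 ≤ r ^ d := by positivity
  calc ((closedBall x₀ r).ncard : ℝ) ≤ N * ((closedBall y₀ (A * r)).ncard : ℝ) := by
        exact_mod_cast hcard
    _ ≤ N * (C * (A * r) ^ d) := by gcongr; exact hgrow _ hAr
    _ = N * (C * A ^ d) * r ^ d := by rw [mul_pow]; ring
    _ ≤ _ := by nlinarith
end
end

section
/- Let (X, d_X) and (Y, d_Y) be metric spaces and α : X → Y a coarse embedding. Then for every n ∈ ℕ, if Y has asymptotic dimension at most n, then X has asymptotic dimension at most n. -/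
open Filter Metric Set Bornology

noncomputable section

universe u

/-- A metric space `Z` has asymptotic dimension at most `n`: for every `r > 0` there is a
uniformly bounded cover of `Z` split into `n + 1` families such that two distinct members of a
same family are at distance `> r` from each other. -/
def AsdimLE (Z : Type u) [MetricSpace Z] (n : ℕ) : Prop :=
  ∀ r : ℝ, 0 < r → ∃ (I : Type u) (U : I → Set Z) (D : ℝ) (c : I → Fin (n + 1)),
    (∀ z : Z, ∃ i : I, z ∈ U i) ∧
    (∀ i : I, Bornology.IsBounded (U i) ∧ Metric.diam (U i) ≤ D) ∧
    (∀ i j : I, i ≠ j → c i = c j → ∀ x ∈ U i, ∀ y ∈ U j, r < dist x y)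

/-- If `α : X → Y` is a coarse embedding and `Y` has asymptotic dimension at
most `n`, then `X` has asymptotic dimension at most `n`. -/
theorem asdim_le_of_coarseEmbedding
    {X : Type u} {Y : Type*} [MetricSpace X] [MetricSpace Y]
    (α : X → Y) (hα : IsCoarseEmbedding α) (n : ℕ)
    (hY : AsdimLE Y n) : AsdimLE X n := by
  obtain ⟨φm, φp, -, hp, hm', -, h⟩ := hα
  intro r hr
  obtain ⟨I, U, D, c, hcov, hbd, hsep⟩ := hY (max (φp r) 1) (by positivity)
  choose f hf using fun x : X => hcov (α x)
  obtain ⟨R, hR⟩ := Filter.eventually_atTop.1 (hm'.eventually_ge_atTop (D + 1))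
  have key : ∀ i : I, ∀ x ∈ α ⁻¹' (U i), ∀ y ∈ α ⁻¹' (U i), dist x y ≤ max R 0 := by
    intro i x hx y hy
    have h1 := Metric.dist_le_diam_of_mem (hbd i).1 hx hy
    have h2 := (hbd i).2
    have h3 := (h x y).1
    by_contra hlt
    push Not at hlt
    have h4 := hR (dist x y) ((le_max_left R 0).trans hlt.le)
    linarith
  -- index by the quotient of `X` by the kernel of `f`, which lives in the universe of `X`
  let g : Quotient (Setoid.ker f) → I := Quotient.lift f (fun _ _ hab => hab)
  have hg : Function.Injective g := by
    intro a b
    induction a using Quotient.inductionOn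
    induction b using Quotient.inductionOn
    exact fun e => Quotient.sound e
  refine ⟨Quotient (Setoid.ker f), fun q => α ⁻¹' (U (g q)), max R 0, fun q => c (g q),
    fun x => ⟨Quotient.mk _ x, hf x⟩, fun q => ⟨?_, ?_⟩, ?_⟩
  · exact Metric.isBounded_iff.2 ⟨max R 0, fun x hx y hy => key _ x hx y hy⟩
  · exact Metric.diam_le_of_forall_dist_le (le_max_right _ _) (key _)
  · intro i j hij hc x hx y hy
    have h1 := hsep (g i) (g j) (fun e => hij (hg e)) hc _ hx _ hy
    by_contra hle
    push Not at hle
    have h2 := hp (Set.mem_Ici.2 dist_nonneg) (Set.mem_Ici.2 hr.le) hle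
    have h3 := (h x y).2
    have h4 := le_max_left (φp r) 1
    linarith
end
end
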